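/- For every x in the open interval (a,b), the symmetric partial sums S_N(x) = ∑_{n=−N}^{N} C_n (f_n(x), g_n(x)) converge, as N → ∞, to (F₁(x), F₂(x)). -/

import Mathlib

/-!
Writing `z = g + i f`, the system becomes `z' = i (λ ρ - s) z + m conj z`. The Prüfer angle of a
solution is increasing in `λ`, so the eigenvalues are the `λ_k`, `k ∈ ℤ`, at which the angle at `b`
equals `π k - β`, and the eigenfunction `y_k` is an explicit exponential of integrals of `ρ`, `s`
and an oscillating integral of `m` which is `O(1 / k)`. Hence `y_k` is `O(1 / k)`-close to the
eigenfunction `e_k` of the problem with `m = 0`, an exponential of an affine function of `k`. The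
`e_k` form a Hilbert basis by Stone–Weierstrass, and so do the `y_k`, being orthonormal and
quadratically close to them.

Let `c_k` be the coefficients of a `C¹` function `F`. By Green's identity `c_k` is, up to an
absolutely summable error, `((-1) ^ k B - A) / k` for constants `A`, `B`. Thus `∑ c_k y_k` is the
sum of an absolutely convergent series and of the series `∑ ((-1) ^ k B - A) e_k / k`, which
converges locally uniformly in the interior by Dirichlet's test. The sum is continuous there and
agrees with the `L²` limit, which is `F`. Any ordered listing of the spectrum with orthonormal
eigenfunctions is, up to signs, a translate of `y_k`, and conditional sums over `ℤ` are translation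
invariant.
-/

/-- The pair `(f,g)`, continuously differentiable on `[a,b]`, satisfies the
Dirac-type system with parameter `lam`:
`-g' + t g + (p - lam ρ) f = 0` and `f' + t f + (q - lam ρ) g = 0` on `[a,b]`. -/
def SatisfiesDiracSystem (a b : ℝ) (p q t ρ : ℝ → ℝ) (lam : ℝ) (f g : ℝ → ℝ) : Prop :=
  ∃ f' g' : ℝ → ℝ,
    (∀ x ∈ Set.Icc a b, HasDerivWithinAt f (f' x) (Set.Icc a b) x) ∧
    (∀ x ∈ Set.Icc a b, HasDerivWithinAt g (g' x) (Set.Icc a b) x) ∧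
    ContinuousOn f' (Set.Icc a b) ∧ ContinuousOn g' (Set.Icc a b) ∧
    (∀ x ∈ Set.Icc a b, -g' x + t x * g x + (p x - lam * ρ x) * f x = 0) ∧
    (∀ x ∈ Set.Icc a b, f' x + t x * f x + (q x - lam * ρ x) * g x = 0)

/-- The separated boundary conditions
`f(a) cos α + g(a) sin α = 0` and `f(b) cos β + g(b) sin β = 0`. -/
def DiracBC (a b α β : ℝ) (f g : ℝ → ℝ) : Prop :=
  f a * Real.cos α + g a * Real.sin α = 0 ∧
  f b * Real.cos β + g b * Real.sin β = 0

/-- `lam` is an eigenvalue of the Dirac-type boundary-value problem. -/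
def IsDiracEigenvalue (a b : ℝ) (p q t ρ : ℝ → ℝ) (α β lam : ℝ) : Prop :=
  ∃ f g : ℝ → ℝ,
    SatisfiesDiracSystem a b p q t ρ lam f g ∧
    (∃ x ∈ Set.Icc a b, (f x ≠ 0 ∨ g x ≠ 0)) ∧
    DiracBC a b α β f g

open Set Filter MeasureTheory SummationFilter
open scoped Topology ComplexConjugate NNReal Interval

section IntervalCalculus

variable {E : Type*} [NormedAddCommGroup E] [NormedSpace ℝ E] {a b : ℝ}

theorem hasDerivWithinAt_integral_Icc [CompleteSpace E] {φ : ℝ → E}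
    (hφ : ContinuousOn φ (Icc a b)) {x : ℝ} (hx : x ∈ Icc a b) :
    HasDerivWithinAt (fun x ↦ ∫ y in a..x, φ y) (φ x) (Icc a b) x := by
  have : Fact (x ∈ Icc a b) := ⟨hx⟩
  have ha : a ∈ Icc a b := left_mem_Icc.2 (hx.1.trans hx.2)
  exact intervalIntegral.integral_hasDerivWithinAt_right
    (hφ.mono (uIcc_subset_Icc ha hx)).intervalIntegrable
    (hφ.stronglyMeasurableAtFilter_nhdsWithin measurableSet_Icc x) (hφ x hx)

theorem integral_eq_sub_of_hasDerivWithinAt_Icc [CompleteSpace E] {f f' : ℝ → E}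
    (hf : ∀ x ∈ Icc a b, HasDerivWithinAt f (f' x) (Icc a b) x)
    (hf' : ContinuousOn f' (Icc a b)) {x : ℝ} (hx : x ∈ Icc a b) :
    ∫ y in a..x, f' y = f x - f a := by
  have hsub : Icc a x ⊆ Icc a b := Icc_subset_Icc_right hx.2
  refine intervalIntegral.integral_eq_sub_of_hasDerivAt_of_le hx.1
    (fun y hy ↦ ((hf y (hsub hy)).mono hsub).continuousWithinAt) (fun y hy ↦ ?_)
    ((hf'.mono hsub).intervalIntegrable_of_Icc hx.1)
  exact (hf y (hsub (Ioo_subset_Icc_self hy))).hasDerivAt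
    (Icc_mem_nhds hy.1 (hy.2.trans_le hx.2))

theorem hasDerivWithinAt_Ici_of_Icc {f : ℝ → E} {f' : E} {x : ℝ} (hx : x ∈ Ico a b)
    (hf : HasDerivWithinAt f f' (Icc a b) x) : HasDerivWithinAt f f' (Ici x) x :=
  hf.mono_of_mem_nhdsWithin (Icc_mem_nhdsGE_of_mem hx)

theorem norm_integral_mul_deriv_le {u u' v v' : ℝ → ℂ} {A B : ℝ} (hab : a ≤ b)
    (hu : ∀ x ∈ Icc a b, HasDerivWithinAt u (u' x) (Icc a b) x) (hu' : ContinuousOn u' (Icc a b))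
    (hv : ∀ x ∈ Icc a b, HasDerivWithinAt v (v' x) (Icc a b) x) (hv' : ContinuousOn v' (Icc a b))
    (hA : ∀ x ∈ Icc a b, ‖u x‖ ≤ A) (hB : ∀ x ∈ Icc a b, ‖u' x‖ ≤ B)
    (hv₁ : ∀ x ∈ Icc a b, ‖v x‖ ≤ 1) :
    ‖∫ x in a..b, u x * v' x‖ ≤ 2 * A + B * (b - a) := by
  have hbdry {x : ℝ} (hx : x ∈ Icc a b) : ‖u x * v x‖ ≤ A := by
    simpa using mul_le_mul (hA x hx) (hv₁ x hx) (norm_nonneg _) ((norm_nonneg _).trans (hA x hx))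
  have hint : ‖∫ x in a..b, u' x * v x‖ ≤ B * (b - a) := by
    rw [← abs_of_nonneg (sub_nonneg.2 hab)]
    refine intervalIntegral.norm_integral_le_of_norm_le_const fun x hx ↦ ?_
    have hx : x ∈ Icc a b := Ioc_subset_Icc_self (uIoc_of_le hab ▸ hx)
    simpa using mul_le_mul (hB x hx) (hv₁ x hx) (norm_nonneg _) ((norm_nonneg _).trans (hB x hx))
  rw [← uIcc_of_le hab] at hu hv
  rw [intervalIntegral.integral_mul_deriv_eq_deriv_mul_of_hasDerivWithinAt hu hv
    (hu'.intervalIntegrable_of_Icc hab) (hv'.intervalIntegrable_of_Icc hab)]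
  calc _ ≤ ‖u b * v b‖ + ‖u a * v a‖ + ‖∫ x in a..b, u' x * v x‖ :=
        (norm_sub_le _ _).trans (by gcongr; exact norm_sub_le _ _)
    _ ≤ A + A + B * (b - a) := by
        gcongr
        exacts [hbdry (right_mem_Icc.2 hab), hbdry (left_mem_Icc.2 hab)]
    _ = 2 * A + B * (b - a) := by ring

theorem norm_integral_mul_exp_add_le {κ κ' : ℝ → ℂ} {φ φ' ψ ψ' : ℝ → ℝ} {N N' L : ℝ} (hab : a ≤ b)
    (hκ : ∀ x ∈ Icc a b, HasDerivWithinAt κ (κ' x) (Icc a b) x) (hκ' : ContinuousOn κ' (Icc a b))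
    (hφ : ∀ x ∈ Icc a b, HasDerivWithinAt φ (φ' x) (Icc a b) x) (hφ' : ContinuousOn φ' (Icc a b))
    (hψ : ∀ x ∈ Icc a b, HasDerivWithinAt ψ (ψ' x) (Icc a b) x) (hψ' : ContinuousOn ψ' (Icc a b))
    (hN : ∀ x ∈ Icc a b, ‖κ x‖ ≤ N) (hN' : ∀ x ∈ Icc a b, ‖κ' x‖ ≤ N')
    (hL : ∀ x ∈ Icc a b, |φ' x| ≤ L) :
    ‖∫ x in a..b, κ x * ψ' x * Complex.exp ((φ x + ψ x : ℝ) * Complex.I)‖ ≤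
      2 * N + (N' + N * L) * (b - a) := by
  have hκc : ContinuousOn κ (Icc a b) := fun x hx ↦ (hκ x hx).continuousWithinAt
  have hφc : ContinuousOn φ (Icc a b) := fun x hx ↦ (hφ x hx).continuousWithinAt
  have hψc : ContinuousOn ψ (Icc a b) := fun x hx ↦ (hψ x hx).continuousWithinAt
  have hN₀ : 0 ≤ N := (norm_nonneg _).trans (hN a (left_mem_Icc.2 hab))
  have hbound := norm_integral_mul_deriv_le (A := N) (B := N' + N * L) hab
    (fun x hx ↦ (hκ x hx).fun_mul ((hφ x hx).ofReal_comp.mul_const Complex.I).cexp)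
    (by fun_prop) (fun x hx ↦ ((hψ x hx).ofReal_comp.mul_const Complex.I).cexp) (by fun_prop)
    (fun x hx ↦ ?_) (fun x hx ↦ ?_) (fun x _ ↦ (Complex.norm_exp_ofReal_mul_I _).le)
  · convert hbound using 1
    rw [← one_mul ‖_‖, ← Complex.norm_I, ← norm_mul, ← intervalIntegral.integral_const_mul]
    congr 2 with x
    push_cast
    rw [add_mul, Complex.exp_add]
    ring
  · simpa [Complex.norm_exp_ofReal_mul_I] using hN x hx
  · refine (norm_add_le _ _).trans ?_
    simp only [norm_mul, Complex.norm_exp_ofReal_mul_I, Complex.norm_real, Complex.norm_I, mul_one,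
      one_mul, Real.norm_eq_abs]
    gcongr
    exacts [hN' x hx, hN x hx, hL x hx]

end IntervalCalculus

section ODE

theorem lipschitzWith_exp_mul_I (c : ℝ) :
    LipschitzWith ‖c‖₊ fun θ : ℝ ↦ Complex.exp (((c * θ : ℝ) : ℂ) * Complex.I) := by
  refine LipschitzWith.of_dist_le_mul fun θ φ ↦ ?_
  have hfac : Complex.exp (((c * θ : ℝ) : ℂ) * Complex.I) -
      Complex.exp (((c * φ : ℝ) : ℂ) * Complex.I) = Complex.exp (((c * φ : ℝ) : ℂ) * Complex.I) *
        (Complex.exp (Complex.I * ((c * (θ - φ) : ℝ) : ℂ)) - 1) := by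
    rw [mul_sub, ← Complex.exp_add, mul_one]
    push_cast
    ring_nf
  rw [dist_eq_norm, hfac, norm_mul, Complex.norm_exp_ofReal_mul_I, one_mul, Real.dist_eq]
  exact Real.norm_exp_I_mul_ofReal_sub_one_le.trans_eq (by simp)

variable {a b : ℝ} {K : ℝ≥0}

/- A bounded field cannot leave a ball that is large compared with `b - a`, so a single application
of Picard–Lindelöf covers the whole interval. -/
theorem exists_hasDerivWithinAt_of_lipschitz_of_bounded {E : Type*} [NormedAddCommGroup E]
    [NormedSpace ℝ E] [CompleteSpace E] {v : ℝ → E → E} {L : ℝ≥0} (hab : a ≤ b)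
    (hlip : ∀ x ∈ Icc a b, LipschitzWith K (v x)) (hcont : ∀ y, ContinuousOn (v · y) (Icc a b))
    (hbdd : ∀ x ∈ Icc a b, ∀ y, ‖v x y‖ ≤ L) (y₀ : E) :
    ∃ θ : ℝ → E, θ a = y₀ ∧ ∀ x ∈ Icc a b, HasDerivWithinAt θ (v x (θ x)) (Icc a b) x := by
  have hPL : IsPicardLindelof v (⟨a, left_mem_Icc.2 hab⟩ : Icc a b) y₀
      (L * (b - a).toNNReal) 0 L K :=
    { lipschitzOnWith := fun x hx ↦ (hlip x hx).lipschitzOnWith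
      continuousOn := fun y _ ↦ hcont y
      norm_le := fun x hx y _ ↦ hbdd x hx y
      mul_max_le := by simp [hab] }
  exact hPL.exists_eq_forall_mem_Icc_hasDerivWithinAt₀

theorem lt_of_hasDerivWithinAt_of_lipschitz {v w : ℝ → ℝ → ℝ} {θ φ : ℝ → ℝ} {ε : ℝ} (hab : a < b)
    (hε : 0 < ε) (hlip : ∀ x ∈ Icc a b, LipschitzWith K (v x))
    (hvw : ∀ x ∈ Icc a b, ∀ y, v x y + ε ≤ w x y)
    (hθ : ∀ x ∈ Icc a b, HasDerivWithinAt θ (v x (θ x)) (Icc a b) x)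
    (hφ : ∀ x ∈ Icc a b, HasDerivWithinAt φ (w x (φ x)) (Icc a b) x) (ha : θ a ≤ φ a) :
    θ b < φ b := by
  obtain ⟨δ, hδ, hδε⟩ : ∃ δ > 0, δ * (1 + K * (b - a)) < ε := by
    have hpos : 0 < 1 + K * (b - a) := by nlinarith [K.2, mul_nonneg K.2 (sub_pos.2 hab).le]
    exact ⟨ε / (2 * (1 + K * (b - a))), by positivity, by field_simp; norm_num⟩
  have hφδ : ∀ x ∈ Icc a b,
      HasDerivWithinAt (fun x ↦ φ x - δ * (x - a)) (w x (φ x) - δ) (Icc a b) x := fun x hx ↦ by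
    simpa using (hφ x hx).fun_sub (((hasDerivWithinAt_id x _).sub_const a).const_mul δ)
  have hfence := image_le_of_deriv_right_lt_deriv_boundary'
    (fun x hx ↦ (hθ x hx).continuousWithinAt)
    (fun x hx ↦ hasDerivWithinAt_Ici_of_Icc hx (hθ x (Ico_subset_Icc_self hx)))
    (by simpa using ha) (fun x hx ↦ (hφδ x hx).continuousWithinAt)
    (fun x hx ↦ hasDerivWithinAt_Ici_of_Icc hx (hφδ x (Ico_subset_Icc_self hx)))
    (fun x hx heq ↦ ?_) (right_mem_Icc.2 hab.le)
  · nlinarith [mul_pos hδ (sub_pos.2 hab)]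
  · have hxI := Ico_subset_Icc_self hx
    have hdist : |v x (θ x) - v x (φ x)| ≤ K * (δ * (x - a)) := by
      have := (hlip x hxI).dist_le_mul (θ x) (φ x)
      rwa [Real.dist_eq, Real.dist_eq, heq, sub_sub_cancel_left, abs_neg,
        abs_of_nonneg (mul_nonneg hδ.le (sub_nonneg.2 hx.1)), ← heq] at this
    have hK : K * (δ * (x - a)) ≤ K * (δ * (b - a)) := by gcongr; exact hx.2.le
    linarith [le_abs_self (v x (θ x) - v x (φ x)), hvw x hxI (φ x)]

end ODE

section TrigonometricCompleteness

variable {X : Type*} [TopologicalSpace X]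

/-- The exponential `exp (i φ)` of a continuous phase `φ`. -/
noncomputable def expMulI (φ : C(X, ℝ)) : C(X, ℂ) :=
  ⟨fun x ↦ Complex.exp (φ x * Complex.I), by fun_prop⟩

theorem expMulI_apply (φ : C(X, ℝ)) (x : X) : expMulI φ x = Complex.exp (φ x * Complex.I) := rfl

theorem expMulI_add (φ ψ : C(X, ℝ)) : expMulI (φ + ψ) = expMulI φ * expMulI ψ := by
  ext x
  simp [expMulI, add_mul, Complex.exp_add]

theorem star_expMulI (φ : C(X, ℝ)) : star (expMulI φ) = expMulI (-φ) := by
  ext x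
  simp [expMulI, ← Complex.exp_conj]

theorem exists_eq_expMulI_zsmul {φ : C(X, ℝ)} {u : C(X, ℂ)}
    (hu : u ∈ Submonoid.closure {expMulI φ, star (expMulI φ)}) :
    ∃ k : ℤ, u = expMulI (k • φ) := by
  induction hu using Submonoid.closure_induction with
  | mem u hu =>
    rcases hu with rfl | rfl
    exacts [⟨1, by rw [one_zsmul]⟩, ⟨-1, by rw [star_expMulI, neg_one_zsmul]⟩]
  | one => exact ⟨0, by ext x; simp [expMulI]⟩
  | mul u v _ _ hu hv =>
    obtain ⟨⟨k, rfl⟩, l, rfl⟩ := hu, hv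
    exact ⟨k + l, by rw [add_zsmul, expMulI_add]⟩

theorem expMulI_natCast_smul (φ : C(X, ℝ)) (n : ℕ) : expMulI ((n : ℤ) • φ) = expMulI φ ^ n := by
  ext x
  simp [expMulI_apply, mul_assoc, Complex.exp_nat_mul]

theorem expMulI_zsmul_add_const_pi (φ : C(X, ℝ)) (k : ℤ) :
    expMulI (k • (φ + .const X Real.pi)) = (-1 : ℝ) ^ k • expMulI (k • φ) := by
  ext x
  have hpi : expMulI (k • .const X Real.pi) x = ((-1 : ℝ) ^ k : ℝ) := by
    simp [expMulI_apply, mul_assoc, Complex.exp_int_mul]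
  rw [zsmul_add, expMulI_add, ContinuousMap.mul_apply, hpi, ContinuousMap.smul_apply,
    Complex.real_smul, mul_comm]

theorem expMulI_apply_ne_one {φ : C(X, ℝ)} {x : X} (hx : Real.sin (φ x) ≠ 0) :
    expMulI φ x ≠ 1 := fun h ↦ hx <| by
  rw [← Complex.exp_ofReal_mul_I_im, ← expMulI_apply, h, Complex.one_im]

variable [CompactSpace X]

theorem norm_expMulI_le (φ : C(X, ℝ)) : ‖expMulI φ‖ ≤ 1 :=
  (ContinuousMap.norm_le _ zero_le_one).2 fun _ ↦ (Complex.norm_exp_ofReal_mul_I _).le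

/-- The closed real algebra generated by `exp (i φ)` and `exp (-i φ)`. -/
noncomputable def trigAlgebra (φ : C(X, ℝ)) : Subalgebra ℝ C(X, ℂ) :=
  (Algebra.adjoin ℝ {expMulI φ, star (expMulI φ)}).topologicalClosure

variable {φ : C(X, ℝ)}

theorem expMulI_mem_trigAlgebra : expMulI φ ∈ trigAlgebra φ :=
  Subalgebra.le_topologicalClosure _ (Algebra.subset_adjoin (.inl rfl))

theorem star_expMulI_mem_trigAlgebra : star (expMulI φ) ∈ trigAlgebra φ :=
  Subalgebra.le_topologicalClosure _ (Algebra.subset_adjoin (.inr rfl))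

theorem ofReal_mem_trigAlgebra (hcos : Function.Injective fun x ↦ Real.cos (φ x)) (χ : C(X, ℝ)) :
    (⟨fun x ↦ (χ x : ℂ), by fun_prop⟩ : C(X, ℂ)) ∈ trigAlgebra φ := by
  set B := (trigAlgebra φ).comap
    (Complex.ofRealAm.compLeftContinuous ℝ (α := X) Complex.continuous_ofReal)
  have hclosed : IsClosed (B : Set C(X, ℝ)) :=
    (Subalgebra.isClosed_topologicalClosure _).preimage (ContinuousMap.continuous_postcomp _)
  have hmem : (⟨fun x ↦ Real.cos (φ x), by fun_prop⟩ : C(X, ℝ)) ∈ B := by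
    have hcos_mem : (1 / 2 : ℝ) • (expMulI φ + star (expMulI φ)) ∈ trigAlgebra φ :=
      (trigAlgebra φ).smul_mem ((trigAlgebra φ).add_mem expMulI_mem_trigAlgebra
        star_expMulI_mem_trigAlgebra) _
    change _ ∈ trigAlgebra φ
    convert hcos_mem using 1
    ext x
    change (Real.cos (φ x) : ℂ) = (1 / 2 : ℝ) • (expMulI φ x + conj (expMulI φ x))
    rw [Complex.add_conj, expMulI_apply, Complex.exp_ofReal_mul_I_re,
      Complex.real_smul]
    push_cast
    ring
  have htop := ContinuousMap.subalgebra_topologicalClosure_eq_top_of_separatesPoints B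
    fun x y hxy ↦ ⟨_, ⟨_, hmem, rfl⟩, hcos.ne hxy⟩
  rw [← SetLike.coe_set_eq, Subalgebra.topologicalClosure_coe, hclosed.closure_eq,
    SetLike.coe_set_eq] at htop
  exact htop.ge (Algebra.mem_top (x := χ))

theorem sin_mul_I_mul_ofReal_mem_trigAlgebra (hcos : Function.Injective fun x ↦ Real.cos (φ x))
    (χ : C(X, ℝ)) : (⟨fun x ↦ Real.sin (φ x) * Complex.I * χ x, by fun_prop⟩ : C(X, ℂ)) ∈
      trigAlgebra φ := by
  have hsin_mem : (1 / 2 : ℝ) • (expMulI φ - star (expMulI φ)) ∈ trigAlgebra φ :=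
    (trigAlgebra φ).smul_mem ((trigAlgebra φ).sub_mem expMulI_mem_trigAlgebra
      star_expMulI_mem_trigAlgebra) _
  convert (trigAlgebra φ).mul_mem hsin_mem (ofReal_mem_trigAlgebra hcos χ) using 1
  ext x
  change (Real.sin (φ x) : ℂ) * Complex.I * χ x =
    (1 / 2 : ℝ) • (expMulI φ x - conj (expMulI φ x)) * χ x
  rw [Complex.sub_conj, expMulI_apply, Complex.exp_ofReal_mul_I_im,
    Complex.real_smul]
  push_cast
  ring

variable [MeasurableSpace X] [BorelSpace X] {μ : Measure X} [IsFiniteMeasure μ]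

theorem inner_toLp_mul_eq_zero_of_mem_trigAlgebra {ψ : C(X, ℝ)} {h : Lp ℂ 2 μ}
    (hk : ∀ k : ℤ, inner ℝ h (ContinuousMap.toLp 2 μ ℝ (expMulI (ψ + k • φ))) = 0) {w : C(X, ℂ)}
    (hw : w ∈ trigAlgebra φ) : inner ℝ h (ContinuousMap.toLp 2 μ ℝ (expMulI ψ * w)) = 0 := by
  set ℓ : C(X, ℂ) →L[ℝ] ℝ := innerSL ℝ h ∘L ContinuousMap.toLp 2 μ ℝ ∘L
    ContinuousLinearMap.mul ℝ C(X, ℂ) (expMulI ψ)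
  have hspan : (Algebra.adjoin ℝ {expMulI φ, star (expMulI φ)}).toSubmodule ≤
      LinearMap.ker ℓ.toLinearMap := by
    rw [Algebra.adjoin_eq_span, Submodule.span_le]
    intro w hw
    obtain ⟨k, rfl⟩ := exists_eq_expMulI_zsmul hw
    simpa [ℓ, expMulI_add] using hk k
  exact closure_minimal hspan (isClosed_singleton.preimage ℓ.continuous) hw

variable [NormalSpace X] [μ.WeaklyRegular]

theorem ae_eq_zero_of_forall_integral_continuousMap_mul_eq_zero {ψ : X → ℝ} (hψ : MemLp ψ 2 μ)
    (h : ∀ φ : C(X, ℝ), ∫ x, φ x * ψ x ∂μ = 0) : ψ =ᵐ[μ] 0 := by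
  have hzero : hψ.toLp = 0 := by
    refine (ContinuousMap.toLp_denseRange ℝ μ (p := 2) ℝ ENNReal.ofNat_ne_top
      ).eq_zero_of_inner_left ℝ fun φ ↦ ?_
    rw [L2.inner_def, ← h φ]
    refine integral_congr_ae ?_
    filter_upwards [hψ.coeFn_toLp, ContinuousMap.coeFn_toLp (p := 2) μ (𝕜 := ℝ) φ] with x h₁ h₂
    rw [h₁, h₂, RCLike.inner_apply, conj_trivial]
  exact (hψ.toLp_eq_toLp_iff MemLp.zero).1 (hzero.trans (MemLp.toLp_zero _).symm)

/- Real `χ` and `i (sin φ) χ` lie in `trigAlgebra φ`; they test the real and the imaginary part of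
`exp (-i ψ) h`. -/
theorem eq_zero_of_forall_inner_expMulI_eq_zero {ψ : C(X, ℝ)}
    (hcos : Function.Injective fun x ↦ Real.cos (φ x)) (hsin : ∀ᵐ x ∂μ, Real.sin (φ x) ≠ 0)
    {h : Lp ℂ 2 μ}
    (hk : ∀ k : ℤ, inner ℝ h (ContinuousMap.toLp 2 μ ℝ (expMulI (ψ + k • φ))) = 0) :
    h = 0 := by
  set h' : X → ℂ := fun x ↦ conj (expMulI ψ x) * h x with hh'_def
  have hinner (w : C(X, ℂ)) (hw : w ∈ trigAlgebra φ) : ∫ x, (conj (h' x) * w x).re ∂μ = 0 := by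
    rw [← inner_toLp_mul_eq_zero_of_mem_trigAlgebra hk hw, L2.inner_def]
    refine integral_congr_ae ?_
    filter_upwards [ContinuousMap.coeFn_toLp (p := 2) μ (𝕜 := ℝ) (expMulI ψ * w)] with x hx
    rw [hx, Complex.inner, ContinuousMap.mul_apply, hh'_def, map_mul, Complex.conj_conj]
    ring_nf
  have hh' : MemLp h' 2 μ := by
    refine (Lp.memLp h).of_le ?_ (.of_forall fun x ↦ ?_)
    · exact (by fun_prop : Continuous fun x ↦ conj (expMulI ψ x)).aestronglyMeasurable.mul
        (Lp.aestronglyMeasurable h)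
    · simp [h', expMulI, Complex.norm_exp_ofReal_mul_I]
  have hre : (fun x ↦ (h' x).re) =ᵐ[μ] 0 :=
    ae_eq_zero_of_forall_integral_continuousMap_mul_eq_zero hh'.re fun χ ↦ by
      rw [← hinner _ (ofReal_mem_trigAlgebra hcos χ)]
      simp [mul_comm]
  have him : (fun x ↦ Real.sin (φ x) * (h' x).im) =ᵐ[μ] 0 := by
    refine ae_eq_zero_of_forall_integral_continuousMap_mul_eq_zero ?_ fun χ ↦ ?_
    · have hsin_cont : Continuous fun x ↦ Real.sin (φ x) := by fun_prop
      refine hh'.im.of_le (hsin_cont.aestronglyMeasurable.mul hh'.im.aestronglyMeasurable)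
        (.of_forall fun x ↦ ?_)
      exact (norm_mul_le _ _).trans
        (mul_le_of_le_one_left (norm_nonneg _) (Real.abs_sin_le_one _))
    · rw [← hinner _ (sin_mul_I_mul_ofReal_mem_trigAlgebra hcos χ)]
      refine integral_congr_ae (.of_forall fun x ↦ ?_)
      simp only [ContinuousMap.coe_mk, Complex.mul_re, Complex.mul_im, Complex.conj_re,
        Complex.conj_im, Complex.ofReal_re, Complex.ofReal_im, Complex.I_re, Complex.I_im]
      ring
  refine (Lp.eq_zero_iff_ae_eq_zero).2 ?_
  filter_upwards [hre, him, hsin] with x hre him hsin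
  have hzero : h' x = 0 := Complex.ext hre ((mul_eq_zero.1 him).resolve_left hsin)
  exact (mul_eq_zero.1 hzero).resolve_left (by simp [expMulI])

end TrigonometricCompleteness

section QuadraticallyClose

variable {ι 𝕜 E : Type*} [RCLike 𝕜] [NormedAddCommGroup E] [InnerProductSpace 𝕜 E]
  (e : HilbertBasis ι 𝕜 E) {y : ι → E} {h : E}

theorem hasSum_norm_inner_sq (h : E) : HasSum (fun i ↦ ‖inner 𝕜 (e i) h‖ ^ 2) (‖h‖ ^ 2) := by
  simpa [e.repr_apply_apply] using lp.hasSum_norm (p := 2) (by norm_num) (e.repr h)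

theorem eq_zero_of_tsum_compl_norm_sub_sq_lt_one {s : Finset ι}
    (hsum : Summable fun i ↦ ‖e i - y i‖ ^ 2)
    (hlt : ∑' i : {i // i ∉ s}, ‖e i - y i‖ ^ 2 < 1)
    (he : ∀ i ∈ s, inner 𝕜 (e i) h = 0) (hy : ∀ i ∉ s, inner 𝕜 (y i) h = 0) : h = 0 := by
  by_contra hne
  have hnorm : ‖h‖ ^ 2 ≤ (∑' i : {i // i ∉ s}, ‖e i - y i‖ ^ 2) * ‖h‖ ^ 2 := by
    calc ‖h‖ ^ 2 = ∑' i : {i // i ∉ s}, ‖inner 𝕜 (e i) h‖ ^ 2 := by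
          rw [← (hasSum_norm_inner_sq e h).tsum_eq]
          refine (tsum_subtype_eq_of_support_subset (s := {i | i ∉ s}) fun i hi his ↦ hi ?_).symm
          simp [he i his]
      _ ≤ ∑' i : {i // i ∉ s}, ‖e i - y i‖ ^ 2 * ‖h‖ ^ 2 := by
          refine ((hasSum_norm_inner_sq e h).summable.subtype _).tsum_le_tsum (fun i ↦ ?_)
            ((hsum.subtype _).mul_right _)
          rw [← mul_pow]
          gcongr
          simpa [inner_sub_left, hy i i.2] using norm_inner_le_norm (𝕜 := 𝕜) (e i - y i) h
      _ = _ := tsum_mul_right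
  exact hnorm.not_gt (mul_lt_of_lt_one_left (by positivity) hlt)

/- Modulo finitely many indices the two families differ by a contraction; the remaining indices are
handled by counting dimensions. -/
theorem eq_zero_of_summable_norm_sub_sq (hy : Orthonormal 𝕜 y)
    (hsum : Summable fun i ↦ ‖e i - y i‖ ^ 2) (hh : ∀ i, inner 𝕜 (y i) h = 0) : h = 0 := by
  obtain ⟨s, hs⟩ := ((tendsto_order.1 (tendsto_tsum_compl_atTop_zero
    fun i ↦ ‖e i - y i‖ ^ 2)).2 1 one_pos).exists
  set V : Submodule 𝕜 E := ⨅ i ∉ s, LinearMap.ker (innerₛₗ 𝕜 (y i))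
  have hV {v : E} : v ∈ V ↔ ∀ i ∉ s, inner 𝕜 (y i) v = 0 := by
    simp only [V, Submodule.mem_iInf, LinearMap.mem_ker, innerₛₗ_apply_apply]
  set T : V →ₗ[𝕜] s → 𝕜 := LinearMap.pi fun i ↦ (innerₛₗ 𝕜 (e i)).comp V.subtype
  have hT : Function.Injective T := (injective_iff_map_eq_zero T).2 fun v hv ↦
    Subtype.ext (eq_zero_of_tsum_compl_norm_sub_sq_lt_one e hsum hs
      (fun i hi ↦ congrFun hv ⟨i, hi⟩) (hV.1 v.2))
  have : FiniteDimensional 𝕜 V := .of_injective T hT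
  set w : s → V := fun i ↦ ⟨y i, hV.2 fun j hj ↦ hy.2 fun hji ↦ hj (hji ▸ i.2)⟩
  have hw : LinearIndependent 𝕜 w :=
    .of_comp V.subtype (hy.linearIndependent.comp _ Subtype.val_injective)
  have hcard : Fintype.card s = Module.finrank 𝕜 V := le_antisymm hw.fintype_card_le_finrank
    ((LinearMap.finrank_le_finrank_of_injective hT).trans_eq (Module.finrank_fintype_fun_eq_card 𝕜))
  have hspan : Submodule.span 𝕜 (range w) ≤ (𝕜 ∙ (⟨h, hV.2 fun i _ ↦ hh i⟩ : V))ᗮ :=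
    Submodule.span_le.2 <| by
      rintro _ ⟨i, rfl⟩
      exact Submodule.mem_orthogonal_singleton_iff_inner_left.2 (hh i)
  rw [hw.span_eq_top_of_card_eq_finrank' hcard] at hspan
  exact congrArg Subtype.val (inner_self_eq_zero.1
    (Submodule.mem_orthogonal_singleton_iff_inner_left.1 (hspan Submodule.mem_top)))

end QuadraticallyClose

section SquareSummable

theorem summable_inv_one_add_abs_sq : Summable fun k : ℤ ↦ (1 + |(k : ℝ)|)⁻¹ ^ 2 := by
  have hnat : Summable fun n : ℕ ↦ (1 + |(n : ℝ)|)⁻¹ ^ 2 := by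
    simpa [add_comm] using (summable_nat_add_iff 1).2 (Real.summable_nat_pow_inv.2 one_lt_two)
  exact .of_nat_of_neg (by simpa using hnat) (by simpa using hnat)

theorem summable_mul_of_summable_sq {ι : Type*} {f g : ι → ℝ} (hf : Summable fun i ↦ f i ^ 2)
    (hg : Summable fun i ↦ g i ^ 2) : Summable fun i ↦ f i * g i :=
  .of_norm_bounded (hf.add hg) fun i ↦ by
    rw [Real.norm_eq_abs, abs_mul, ← sq_abs (f i), ← sq_abs (g i)]
    nlinarith [two_mul_le_add_sq |f i| |g i|, mul_nonneg (abs_nonneg (f i)) (abs_nonneg (g i))]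

theorem summable_inv_intCast_mul_of_summable_sq {c : ℤ → ℝ} (hc : Summable fun k ↦ c k ^ 2) :
    Summable fun k : ℤ ↦ (k : ℝ)⁻¹ * c k :=
  summable_mul_of_summable_sq (by simpa using Real.summable_one_div_int_pow.2 one_lt_two) hc

end SquareSummable

section ConditionalSums

theorem exists_eq_add_of_strictMono_of_surjective {σ : ℤ → ℤ} (hmono : StrictMono σ)
    (hsurj : Function.Surjective σ) : ∃ k, ∀ n, σ n = n + k := by
  have hsucc (n : ℤ) : σ (n + 1) = σ n + 1 :=
    (hmono.orderIsoOfSurjective σ hsurj).map_succ n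
  refine ⟨σ 0, fun n ↦ ?_⟩
  induction n with
  | zero => rw [zero_add]
  | succ n ih => rw [hsucc, ih, add_right_comm]
  | pred n ih =>
    have hpred := hsucc (-n - 1)
    rw [sub_add_cancel, ih] at hpred
    linarith

variable {E : Type*} [AddCommGroup E] {f : ℤ → E} {x y : E}

theorem sum_Icc_neg_natCast_natCast (f : ℤ → E) (m n : ℕ) : ∑ i ∈ Finset.Icc (-(m : ℤ)) n, f i =
    f 0 + ∑ i ∈ Finset.range m, f (-(i + 1)) + ∑ i ∈ Finset.range n, f (i + 1) := by
  induction n with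
  | zero =>
    induction m with
    | zero => simp
    | succ m ih =>
      rw [Finset.sum_range_succ, ← add_assoc, add_right_comm, ← ih, Nat.cast_succ, neg_add',
        ← Order.pred_eq_sub_one, ← Finset.insert_Icc_left_eq_Icc_pred (by simp),
        Finset.sum_insert (by simp [Order.pred_eq_sub_one]), add_comm, Order.pred_eq_sub_one]
  | succ n ih =>
    rw [Finset.sum_range_succ, ← add_assoc, ← ih, Nat.cast_succ, ← Order.succ_eq_add_one,
      ← Finset.insert_Icc_right_eq_Icc_succ (by simp only [Order.succ_eq_add_one]; lia),
      Finset.sum_insert (by simp [Order.succ_eq_add_one]), add_comm, Order.succ_eq_add_one]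

variable [TopologicalSpace E]

theorem hasSum_conditional_int_comp_add_right (hf : HasSum f x (conditional ℤ)) (k : ℤ) :
    HasSum (fun n ↦ f (n + k)) x (conditional ℤ) := by
  have hshift : Tendsto (fun p : ℤ × ℤ ↦ (p.1 + k, p.2 + k)) (atBot ×ˢ atTop) (atBot ×ˢ atTop) :=
    (tendsto_atBot_add_const_right _ k tendsto_id).prodMap
      (tendsto_atTop_add_const_right _ k tendsto_id)
  rw [HasSum, conditional_filter, tendsto_map'_iff] at hf ⊢
  refine (hf.comp hshift).congr fun p ↦ ?_
  simp [← Finset.map_add_right_Icc]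

theorem hasSum_conditional_int [ContinuousAdd E]
    (hneg : Tendsto (fun n ↦ ∑ i ∈ Finset.range n, f (-(i + 1))) atTop (𝓝 x))
    (hpos : Tendsto (fun n ↦ ∑ i ∈ Finset.range n, f (i + 1)) atTop (𝓝 y)) :
    HasSum f (f 0 + x + y) (conditional ℤ) := by
  have htoNat : Tendsto Int.toNat atTop atTop :=
    tendsto_atTop.2 fun n ↦ (eventually_ge_atTop (n : ℤ)).mono fun k hk ↦ by lia
  have hsum := (tendsto_const_nhds (x := f 0)).add
    (hneg.comp (htoNat.comp (tendsto_neg_atBot_atTop.comp tendsto_fst))) |>.add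
      (hpos.comp (htoNat.comp tendsto_snd))
  rw [HasSum, conditional_filter, tendsto_map'_iff]
  refine hsum.congr' ?_
  filter_upwards [prod_mem_prod (eventually_le_atBot 0) (eventually_ge_atTop 0)] with p ⟨hp₁, hp₂⟩
  simp only [Function.comp_apply, ← sum_Icc_neg_natCast_natCast, Int.toNat_of_nonneg hp₂,
    Int.toNat_of_nonneg (neg_nonneg.2 hp₁), neg_neg]

end ConditionalSums

section Dirichlet

theorem exists_tendsto_sum_inv_smul_pow {A : Type*} [NormedRing A] [NormedAlgebra ℝ A]
    [CompleteSpace A] {u : A} {C : ℝ} (hC : ∀ n, ‖u ^ n‖ ≤ C) (hu : IsUnit (u - 1)) :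
    ∃ a, Tendsto (fun n ↦ ∑ i ∈ Finset.range n, ((i : ℝ) + 1)⁻¹ • u ^ (i + 1)) atTop (𝓝 a) := by
  obtain ⟨v, hv⟩ := hu
  have hgeom (n : ℕ) : ∑ i ∈ Finset.range n, u ^ (i + 1) = u * ((u ^ n - 1) * ↑v⁻¹) := by
    rw [← geom_sum_mul, ← hv, Units.mul_inv_cancel_right, Finset.mul_sum]
    exact Finset.sum_congr rfl fun i _ ↦ pow_succ' u i
  refine cauchySeq_tendsto_of_complete (Antitone.cauchySeq_series_mul_of_tendsto_zero_of_bounded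
    (b := ‖u‖ * ((C + ‖(1 : A)‖) * ‖(↑v⁻¹ : A)‖)) (fun m n hmn ↦ by gcongr)
    (by simpa using tendsto_one_div_add_atTop_nhds_zero_nat (𝕜 := ℝ)) fun n ↦ ?_)
  rw [hgeom]
  refine (norm_mul_le _ _).trans (mul_le_mul_of_nonneg_left ((norm_mul_le _ _).trans ?_)
    (norm_nonneg _))
  gcongr
  exact (norm_sub_le _ _).trans (by gcongr; exact hC n)

variable {X : Type*} [TopologicalSpace X] [CompactSpace X] {φ : C(X, ℝ)}

theorem exists_tendsto_sum_inv_smul_expMulI (hφ : ∀ x, expMulI φ x ≠ 1) :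
    ∃ w, Tendsto (fun n ↦ ∑ i ∈ Finset.range n, ((i : ℝ) + 1)⁻¹ • expMulI ((i + 1 : ℤ) • φ))
      atTop (𝓝 w) := by
  obtain ⟨w, hw⟩ := exists_tendsto_sum_inv_smul_pow (u := expMulI φ) (C := 1)
    (fun n ↦ expMulI_natCast_smul φ n ▸ norm_expMulI_le _)
    ((ContinuousMap.isUnit_iff_forall_ne_zero _).2 fun x ↦ sub_ne_zero.2 (hφ x))
  exact ⟨w, hw.congr fun n ↦ by simp_rw [← expMulI_natCast_smul, Nat.cast_succ]⟩

theorem summable_inv_smul_expMulI (hφ : ∀ x, expMulI φ x ≠ 1) :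
    Summable (fun k : ℤ ↦ (k : ℝ)⁻¹ • expMulI (k • φ)) (conditional ℤ) := by
  have hφ' : ∀ x, expMulI (-φ) x ≠ 1 := fun x hx ↦ hφ x <| by
    rw [← star_expMulI] at hx
    simpa using congrArg star hx
  obtain ⟨w, hw⟩ := exists_tendsto_sum_inv_smul_expMulI hφ
  obtain ⟨w', hw'⟩ := exists_tendsto_sum_inv_smul_expMulI hφ'
  refine (hasSum_conditional_int (x := -w') (y := w) ?_ ?_).summable
  · refine hw'.neg.congr fun n ↦ ?_
    rw [← Finset.sum_neg_distrib]
    refine Finset.sum_congr rfl fun i _ ↦ ?_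
    push_cast
    rw [inv_neg, neg_smul, smul_neg, neg_smul]
  · simpa using hw

end Dirichlet

section ContinuousFunctionsInL2

variable {X : Type*} [TopologicalSpace X] [CompactSpace X] [MeasurableSpace X] [BorelSpace X]
  {μ : Measure X} [IsFiniteMeasure μ]

theorem inner_toLp_toLp (u v : C(X, ℂ)) :
    inner ℝ (ContinuousMap.toLp 2 μ ℝ u) (ContinuousMap.toLp 2 μ ℝ v) =
      ∫ x, (conj (u x) * v x).re ∂μ := by
  rw [L2.inner_def]
  refine integral_congr_ae ?_
  filter_upwards [ContinuousMap.coeFn_toLp (p := 2) (𝕜 := ℝ) μ u,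
    ContinuousMap.coeFn_toLp (p := 2) (𝕜 := ℝ) μ v] with x hu hv
  rw [hu, hv, Complex.inner, mul_comm]

theorem eqOn_of_tendsto_toLp_of_forall_tendsto [μ.IsOpenPosMeasure] {ι : Type*} {l : Filter ι}
    [l.NeBot] [l.IsCountablyGenerated] {u : ι → C(X, ℂ)} {v : C(X, ℂ)} {U : Set X} {w : X → ℂ}
    (hU : IsOpen U) (hL2 : Tendsto (fun i ↦ ContinuousMap.toLp 2 μ ℝ (u i)) l
      (𝓝 (ContinuousMap.toLp 2 μ ℝ v)))
    (hpt : ∀ x ∈ U, Tendsto (fun i ↦ u i x) l (𝓝 (w x))) (hw : ContinuousOn w U) : EqOn w v U := by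
  obtain ⟨n, hn, hae⟩ := (tendstoInMeasure_of_tendsto_Lp hL2).exists_seq_tendsto_ae'
  refine Measure.eqOn_open_of_ae_eq (μ := μ) ?_ hU hw v.continuous.continuousOn
  rw [EventuallyEq, ae_restrict_iff' hU.measurableSet]
  filter_upwards [hae, ContinuousMap.coeFn_toLp (p := 2) (𝕜 := ℝ) μ v, ae_all_iff.2
    fun j ↦ ContinuousMap.coeFn_toLp (p := 2) (𝕜 := ℝ) μ (u (n j))] with x hx hv hu hxU
  simp_rw [hu, hv] at hx
  exact tendsto_nhds_unique ((hpt x hxU).comp hn) hx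

end ContinuousFunctionsInL2

/-- A Dirac boundary value problem in complex form: the pair `(f, g)` is encoded as `z = g + i f`,
which turns the system into `z' = i (λ ρ - s) z + m conj z` with `s = (p + q) / 2` and
`m = t + i (p - q) / 2`, and the boundary conditions into `Im (e ^ (i α) z a) = 0` and
`Im (e ^ (i β) z b) = 0`. -/
structure DiracProblem where
  (a b α β : ℝ)
  (ρ s : ℝ → ℝ)
  m : ℝ → ℂ
  a_lt_b : a < b
  contDiffOn_ρ : ContDiffOn ℝ 1 ρ (Icc a b)
  ρ_pos : ∀ x ∈ Icc a b, 0 < ρ x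
  continuousOn_s : ContinuousOn s (Icc a b)
  contDiffOn_m : ContDiffOn ℝ 1 m (Icc a b)

namespace DiracProblem

variable (P : DiracProblem) {x : ℝ}

/-- The interval `[a, b]`. -/
def domain : Set ℝ := Icc P.a P.b

/-- Solutions of the Dirac system with spectral parameter `lam`; derivatives are taken within
`[a, b]`. -/
def IsSolution (lam : ℝ) (z : ℝ → ℂ) : Prop :=
  ∀ x ∈ P.domain, HasDerivWithinAt z
    (Complex.I * ((lam * P.ρ x - P.s x : ℝ) : ℂ) * z x + P.m x * conj (z x)) P.domain x

theorem a_mem : P.a ∈ P.domain := left_mem_Icc.2 P.a_lt_b.le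

theorem b_mem : P.b ∈ P.domain := right_mem_Icc.2 P.a_lt_b.le

theorem continuousOn_ρ : ContinuousOn P.ρ P.domain := P.contDiffOn_ρ.continuousOn

theorem continuousOn_m : ContinuousOn P.m P.domain := P.contDiffOn_m.continuousOn

theorem exists_norm_le {E : Type*} [SeminormedAddCommGroup E] {f : ℝ → E}
    (hf : ContinuousOn f P.domain) : ∃ M : ℝ≥0, ∀ x ∈ P.domain, ‖f x‖ ≤ M := by
  obtain ⟨M, hM⟩ := isCompact_Icc.exists_bound_of_continuousOn hf
  exact ⟨M.toNNReal, fun x hx ↦ (hM x hx).trans M.le_coe_toNNReal⟩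

section Phase

/-- The right-hand side of the ordinary differential equation `θ' = phaseField lam x θ` for the
Prüfer angle `θ = arg z` of a solution. -/
noncomputable def phaseField (lam x θ : ℝ) : ℝ :=
  lam * P.ρ x - P.s x + (P.m x * Complex.exp (((-2 * θ : ℝ) : ℂ) * Complex.I)).im

theorem exists_lipschitzWith_phaseField :
    ∃ K : ℝ≥0, ∀ lam, ∀ x ∈ P.domain, LipschitzWith K (P.phaseField lam x) := by
  obtain ⟨M, hM⟩ := P.exists_norm_le P.continuousOn_m
  refine ⟨M * 2, fun lam x hx ↦ LipschitzWith.of_dist_le_mul fun θ φ ↦ ?_⟩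
  rw [phaseField, phaseField, dist_add_left, Real.dist_eq, ← Complex.sub_im, ← mul_sub]
  calc _ ≤ ‖P.m x‖ * ‖Complex.exp (((-2 * θ : ℝ) : ℂ) * Complex.I) -
          Complex.exp (((-2 * φ : ℝ) : ℂ) * Complex.I)‖ :=
        (Complex.abs_im_le_norm _).trans (norm_mul_le _ _)
    _ ≤ M * (2 * dist θ φ) := by
        gcongr
        · exact hM x hx
        · simpa [dist_eq_norm] using (lipschitzWith_exp_mul_I (-2)).dist_le_mul θ φ
    _ = _ := by push_cast; ring

theorem abs_phaseField_sub_le {M : ℝ} (hx : ‖P.m x‖ ≤ M) (lam θ : ℝ) :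
    |P.phaseField lam x θ - (lam * P.ρ x - P.s x)| ≤ M := by
  rw [phaseField, add_sub_cancel_left]
  refine (Complex.abs_im_le_norm _).trans ?_
  rwa [norm_mul, Complex.norm_exp_ofReal_mul_I, mul_one]

theorem exists_phase (lam : ℝ) : ∃ θ : ℝ → ℝ, θ P.a = -P.α ∧
    ∀ x ∈ P.domain, HasDerivWithinAt θ (P.phaseField lam x (θ x)) P.domain x := by
  obtain ⟨K, hK⟩ := P.exists_lipschitzWith_phaseField
  obtain ⟨M, hM⟩ := P.exists_norm_le P.continuousOn_m
  have hfree : ContinuousOn (fun x ↦ lam * P.ρ x - P.s x) P.domain :=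
    (P.continuousOn_ρ.const_mul lam).sub P.continuousOn_s
  obtain ⟨L, hL⟩ := P.exists_norm_le hfree
  refine exists_hasDerivWithinAt_of_lipschitz_of_bounded (L := L + M) P.a_lt_b.le (hK lam)
    (fun θ ↦ hfree.add (Complex.continuous_im.comp_continuousOn (P.continuousOn_m.mul_const _)))
    (fun x hx θ ↦ ?_) _
  have hdiff := P.abs_phaseField_sub_le (hM x hx) lam θ
  calc ‖P.phaseField lam x θ‖
      ≤ ‖lam * P.ρ x - P.s x‖ + ‖P.phaseField lam x θ - (lam * P.ρ x - P.s x)‖ :=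
        norm_le_insert' _ _
    _ ≤ L + M := add_le_add (hL x hx) hdiff

/-- The Prüfer angle of the solution satisfying the boundary condition at `a`. -/
noncomputable def phase (lam : ℝ) : ℝ → ℝ := (P.exists_phase lam).choose

theorem phase_a (lam : ℝ) : P.phase lam P.a = -P.α := (P.exists_phase lam).choose_spec.1

theorem hasDerivWithinAt_phase (lam : ℝ) (hx : x ∈ P.domain) :
    HasDerivWithinAt (P.phase lam) (P.phaseField lam x (P.phase lam x)) P.domain x :=
  (P.exists_phase lam).choose_spec.2 x hx

theorem continuousOn_phase (lam : ℝ) : ContinuousOn (P.phase lam) P.domain :=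
  fun _ hx ↦ (P.hasDerivWithinAt_phase lam hx).continuousWithinAt

theorem strictMono_phase_b : StrictMono fun lam ↦ P.phase lam P.b := by
  intro lam mu hlt
  obtain ⟨K, hK⟩ := P.exists_lipschitzWith_phaseField
  obtain ⟨x₀, hx₀, hmin⟩ := isCompact_Icc.exists_isMinOn ⟨_, P.a_mem⟩ P.continuousOn_ρ
  refine lt_of_hasDerivWithinAt_of_lipschitz (ε := (mu - lam) * P.ρ x₀) P.a_lt_b
    (mul_pos (sub_pos.2 hlt) (P.ρ_pos x₀ hx₀)) (hK lam) (fun x hx y ↦ ?_)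
    (fun _ ↦ P.hasDerivWithinAt_phase lam) (fun _ ↦ P.hasDerivWithinAt_phase mu)
    (by rw [phase_a, phase_a])
  have := mul_le_mul_of_nonneg_left (isMinOn_iff.1 hmin x hx) (sub_pos.2 hlt).le
  simp only [phaseField]
  linarith

theorem continuous_phase_b : Continuous fun lam ↦ P.phase lam P.b := by
  obtain ⟨K, hK⟩ := P.exists_lipschitzWith_phaseField
  obtain ⟨R, hR⟩ := P.exists_norm_le P.continuousOn_ρ
  refine continuous_iff_continuousAt.2 fun lam ↦ tendsto_iff_dist_tendsto_zero.2 ?_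
  have hgronwall (mu : ℝ) : dist (P.phase mu P.b) (P.phase lam P.b) ≤
      gronwallBound 0 K (|mu - lam| * R) (P.b - P.a) := by
    have := dist_le_of_approx_trajectories_ODE_of_mem (v := P.phaseField lam) (s := fun _ ↦ univ)
      (εf := |mu - lam| * R) (εg := 0) (δ := 0)
      (fun x hx ↦ (hK lam x (Ico_subset_Icc_self hx)).lipschitzOnWith)
      (P.continuousOn_phase mu)
      (fun x hx ↦ hasDerivWithinAt_Ici_of_Icc hx
        (P.hasDerivWithinAt_phase mu (Ico_subset_Icc_self hx)))
      (fun x hx ↦ ?_) (fun _ _ ↦ mem_univ _) (P.continuousOn_phase lam)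
      (fun x hx ↦ hasDerivWithinAt_Ici_of_Icc hx
        (P.hasDerivWithinAt_phase lam (Ico_subset_Icc_self hx)))
      (fun x _ ↦ (dist_self _).le) (fun _ _ ↦ mem_univ _) (by simp [phase_a]) P.b P.b_mem
    · simpa using this
    · have hρ_le := mul_le_mul_of_nonneg_left (hR x (Ico_subset_Icc_self hx))
        (abs_nonneg (mu - lam))
      rw [Real.norm_eq_abs, ← abs_mul] at hρ_le
      simpa [Real.dist_eq, phaseField, sub_mul] using hρ_le
  refine squeeze_zero (fun _ ↦ dist_nonneg) hgronwall ?_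
  have hcont : Continuous fun mu ↦ gronwallBound 0 K (|mu - lam| * R) (P.b - P.a) :=
    (gronwallBound_continuous_ε 0 K _).comp (by fun_prop)
  simpa [gronwallBound_ε0_δ0] using hcont.tendsto lam

end Phase

section PrueferForm

/-- The `ρ`-length of `[a, x]`, which parametrizes the phase of the free eigenfunctions. -/
noncomputable def arc (x : ℝ) : ℝ := ∫ y in P.a..x, P.ρ y

/-- The part of the Prüfer angle contributed by the potential `s`, up to sign. -/
noncomputable def gauge (x : ℝ) : ℝ := ∫ y in P.a..x, P.s y

/-- The effect of `m` on the solution: its real part is the logarithm of the amplitude and its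
imaginary part the correction to the Prüfer angle. -/
noncomputable def distortion (lam x : ℝ) : ℂ :=
  ∫ y in P.a..x, P.m y * Complex.exp (((-2 * P.phase lam y : ℝ) : ℂ) * Complex.I)

theorem arc_a : P.arc P.a = 0 := intervalIntegral.integral_same

theorem gauge_a : P.gauge P.a = 0 := intervalIntegral.integral_same

theorem distortion_a (lam : ℝ) : P.distortion lam P.a = 0 := intervalIntegral.integral_same

theorem hasDerivWithinAt_arc (hx : x ∈ P.domain) :
    HasDerivWithinAt P.arc (P.ρ x) P.domain x :=
  hasDerivWithinAt_integral_Icc P.continuousOn_ρ hx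

theorem hasDerivWithinAt_gauge (hx : x ∈ P.domain) :
    HasDerivWithinAt P.gauge (P.s x) P.domain x :=
  hasDerivWithinAt_integral_Icc P.continuousOn_s hx

theorem continuousOn_arc : ContinuousOn P.arc P.domain :=
  fun _ hx ↦ (P.hasDerivWithinAt_arc hx).continuousWithinAt

theorem continuousOn_gauge : ContinuousOn P.gauge P.domain :=
  fun _ hx ↦ (P.hasDerivWithinAt_gauge hx).continuousWithinAt

theorem strictMonoOn_arc : StrictMonoOn P.arc P.domain :=
  strictMonoOn_of_hasDerivWithinAt_pos (convex_Icc _ _) P.continuousOn_arc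
    (fun _ hx ↦ (P.hasDerivWithinAt_arc (interior_subset hx)).mono interior_subset)
    (fun _ hx ↦ P.ρ_pos _ (interior_subset hx))

theorem arc_b_pos : 0 < P.arc P.b := P.arc_a ▸ P.strictMonoOn_arc P.a_mem P.b_mem P.a_lt_b

theorem arc_mem_Icc (hx : x ∈ P.domain) : P.arc x ∈ Icc 0 (P.arc P.b) :=
  ⟨P.arc_a ▸ P.strictMonoOn_arc.monotoneOn P.a_mem hx hx.1,
    P.strictMonoOn_arc.monotoneOn hx P.b_mem hx.2⟩

theorem arc_mem_Ioo (hx : x ∈ Ioo P.a P.b) : P.arc x ∈ Ioo 0 (P.arc P.b) :=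
  have hxI : x ∈ P.domain := Ioo_subset_Icc_self hx
  ⟨P.arc_a ▸ P.strictMonoOn_arc P.a_mem hxI hx.1, P.strictMonoOn_arc hxI P.b_mem hx.2⟩

theorem continuousOn_m_mul_exp_phase (lam : ℝ) : ContinuousOn
    (fun x ↦ P.m x * Complex.exp (((-2 * P.phase lam x : ℝ) : ℂ) * Complex.I)) P.domain :=
  P.continuousOn_m.mul (by
    have := P.continuousOn_phase lam
    fun_prop)

theorem hasDerivWithinAt_distortion (lam : ℝ) (hx : x ∈ P.domain) :
    HasDerivWithinAt (P.distortion lam)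
      (P.m x * Complex.exp (((-2 * P.phase lam x : ℝ) : ℂ) * Complex.I)) P.domain x :=
  hasDerivWithinAt_integral_Icc (P.continuousOn_m_mul_exp_phase lam) hx

theorem continuousOn_distortion (lam : ℝ) : ContinuousOn (P.distortion lam) P.domain :=
  fun _ hx ↦ (P.hasDerivWithinAt_distortion lam hx).continuousWithinAt

theorem hasDerivWithinAt_im_distortion (lam : ℝ) (hx : x ∈ P.domain) :
    HasDerivWithinAt (fun x ↦ (P.distortion lam x).im)
      (P.m x * Complex.exp (((-2 * P.phase lam x : ℝ) : ℂ) * Complex.I)).im P.domain x :=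
  Complex.imCLM.hasFDerivAt.comp_hasDerivWithinAt x (P.hasDerivWithinAt_distortion lam hx)

theorem phase_eq (lam : ℝ) (hx : x ∈ P.domain) :
    P.phase lam x = lam * P.arc x - P.gauge x - P.α + (P.distortion lam x).im := by
  have hder : ∀ y ∈ P.domain, HasDerivWithinAt
      (fun y ↦ P.phase lam y - (lam * P.arc y - P.gauge y + (P.distortion lam y).im)) 0
      P.domain y := fun y hy ↦ by
    simpa [phaseField] using (P.hasDerivWithinAt_phase lam hy).fun_sub
      ((((P.hasDerivWithinAt_arc hy).const_mul lam).fun_sub (P.hasDerivWithinAt_gauge hy)).fun_add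
        (P.hasDerivWithinAt_im_distortion lam hy))
  have hconst := integral_eq_sub_of_hasDerivWithinAt_Icc hder continuousOn_const hx
  simp only [intervalIntegral.integral_zero, phase_a, arc_a, gauge_a, distortion_a,
    Complex.zero_im] at hconst
  linarith

/-- The solution satisfying the boundary condition at `a`, normalized to have modulus `1` at `a`. -/
noncomputable def prueferSolution (lam x : ℝ) : ℂ :=
  Complex.exp (((lam * P.arc x - P.gauge x - P.α : ℝ) : ℂ) * Complex.I + P.distortion lam x)

end PrueferForm

section Solutions

theorem prueferSolution_eq (lam : ℝ) (hx : x ∈ P.domain) : P.prueferSolution lam x =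
    Real.exp (P.distortion lam x).re * Complex.exp (P.phase lam x * Complex.I) := by
  rw [prueferSolution, P.phase_eq lam hx, Complex.ofReal_exp, ← Complex.exp_add]
  conv_lhs => rw [← Complex.re_add_im (P.distortion lam x)]
  push_cast
  ring_nf

theorem prueferSolution_ne_zero (lam x : ℝ) : P.prueferSolution lam x ≠ 0 := Complex.exp_ne_zero _

theorem prueferSolution_a (lam : ℝ) :
    P.prueferSolution lam P.a = Complex.exp (-P.α * Complex.I) := by
  simp [prueferSolution, arc_a, gauge_a, distortion_a]

theorem isSolution_prueferSolution (lam : ℝ) : P.IsSolution lam (P.prueferSolution lam) := by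
  intro x hx
  have hconj : conj (P.prueferSolution lam x) =
      Complex.exp (((-2 * P.phase lam x : ℝ) : ℂ) * Complex.I) * P.prueferSolution lam x := by
    rw [P.prueferSolution_eq lam hx, map_mul, Complex.conj_ofReal, ← Complex.exp_conj,
      mul_left_comm, ← Complex.exp_add, map_mul, Complex.conj_ofReal, Complex.conj_I]
    push_cast
    ring_nf
  have hfree : HasDerivWithinAt (fun x ↦ lam * P.arc x - P.gauge x - P.α)
      (lam * P.ρ x - P.s x) P.domain x :=
    (((P.hasDerivWithinAt_arc hx).const_mul lam).fun_sub (P.hasDerivWithinAt_gauge hx)).sub_const _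
  have hexp := ((hfree.ofReal_comp.mul_const Complex.I).fun_add
    (P.hasDerivWithinAt_distortion lam hx)).cexp
  rw [hconj]
  refine hexp.congr_deriv ?_
  rw [prueferSolution]
  ring

variable {P} {lam : ℝ} {z F : ℝ → ℂ}

theorem IsSolution.continuousOn (hz : P.IsSolution lam z) : ContinuousOn z P.domain :=
  fun x hx ↦ (hz x hx).continuousWithinAt

theorem IsSolution.hasDerivWithinAt_im_conj_mul (hz : P.IsSolution lam z) (hx : x ∈ P.domain)
    {F' : ℂ} (hF : HasDerivWithinAt F F' P.domain x) :
    HasDerivWithinAt (fun x ↦ (conj (z x) * F x).im)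
      ((conj (z x) * (F' + Complex.I * P.s x * F x - P.m x * conj (F x))).im -
        lam * (P.ρ x * (conj (z x) * F x).re)) P.domain x := by
  refine (Complex.imCLM.hasFDerivAt.comp_hasDerivWithinAt x
    ((Complex.conjCLE.toContinuousLinearMap.hasFDerivAt.comp_hasDerivWithinAt x
      (hz x hx)).fun_mul hF)).congr_deriv ?_
  simp only [Function.comp_apply, Complex.imCLM_apply, ContinuousLinearEquiv.coe_coe,
    ContinuousAlgEquiv.coeCLE_apply, ContinuousAlgEquiv.coe_coeCLE, Complex.conjCAE_apply,
    Complex.add_re, Complex.add_im, Complex.sub_re, Complex.sub_im, Complex.mul_re,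
    Complex.mul_im, Complex.conj_re, Complex.conj_im, Complex.ofReal_re, Complex.ofReal_im,
    Complex.I_re, Complex.I_im]
  ring

theorem IsSolution.hasDerivWithinAt_im_conj_mul_isSolution {μ : ℝ} {w : ℝ → ℂ}
    (hz : P.IsSolution lam z) (hw : P.IsSolution μ w) (hx : x ∈ P.domain) :
    HasDerivWithinAt (fun x ↦ (conj (z x) * w x).im)
      ((μ - lam) * (P.ρ x * (conj (z x) * w x).re)) P.domain x := by
  refine (hz.hasDerivWithinAt_im_conj_mul hx (hw x hx)).congr_deriv ?_
  simp only [Complex.add_re, Complex.add_im, Complex.sub_re, Complex.sub_im, Complex.mul_re,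
    Complex.mul_im, Complex.conj_re, Complex.conj_im, Complex.ofReal_re, Complex.ofReal_im,
    Complex.I_re, Complex.I_im]
  ring

theorem IsSolution.im_conj_mul_eq {w : ℝ → ℂ} (hz : P.IsSolution lam z) (hw : P.IsSolution lam w)
    (hx : x ∈ P.domain) : (conj (z x) * w x).im = (conj (z P.a) * w P.a).im := by
  have hder : ∀ y ∈ P.domain, HasDerivWithinAt (fun y ↦ (conj (z y) * w y).im) 0 P.domain y :=
    fun y hy ↦ (hz.hasDerivWithinAt_im_conj_mul_isSolution hw hy).congr_deriv (by
      rw [sub_self, zero_mul])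
  rw [← sub_eq_zero, ← integral_eq_sub_of_hasDerivWithinAt_Icc hder continuousOn_const hx,
    intervalIntegral.integral_zero]

theorem IsSolution.exists_eq_smul_prueferSolution (hz : P.IsSolution lam z)
    (ha : (z P.a * Complex.exp (P.α * Complex.I)).im = 0) :
    ∃ c : ℝ, ∀ x ∈ P.domain, z x = c • P.prueferSolution lam x := by
  set y := P.prueferSolution lam with hy
  have hy_sol : P.IsSolution lam y := P.isSolution_prueferSolution lam
  have hne (x : ℝ) : y x ≠ 0 := P.prueferSolution_ne_zero lam x
  have hya : conj (y P.a) = Complex.exp (P.α * Complex.I) := by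
    rw [hy, prueferSolution_a, ← Complex.exp_conj]
    simp
  have hreal : ∀ x ∈ P.domain, conj (z x) * y x = z x * conj (y x) := fun x hx ↦ by
    have := hy_sol.im_conj_mul_eq hz hx
    rw [hya, mul_comm, mul_comm (Complex.exp _), ha, ← Complex.conj_eq_iff_im] at this
    simpa using this
  have hquot : ∀ x ∈ P.domain, HasDerivWithinAt (fun x ↦ z x / y x) 0 P.domain x := fun x hx ↦
    ((hz x hx).fun_div (hy_sol x hx) (hne x)).congr_deriv <| by
      rw [div_eq_zero_iff]
      exact .inl (by linear_combination P.m x * hreal x hx)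
  obtain ⟨c, hc⟩ : ∃ c : ℝ, c = z P.a / y P.a := by
    refine ⟨(z P.a / y P.a).re, Complex.conj_eq_iff_re.1 ?_⟩
    rw [map_div₀, div_eq_div_iff ((map_ne_zero _).2 (hne _)) (hne _)]
    exact hreal _ P.a_mem
  refine ⟨c, fun x hx ↦ ?_⟩
  have hconst := integral_eq_sub_of_hasDerivWithinAt_Icc hquot continuousOn_const hx
  rw [intervalIntegral.integral_zero, eq_comm, sub_eq_zero, ← hc] at hconst
  rw [Complex.real_smul, ← hconst, div_mul_cancel₀ _ (hne x)]

end Solutions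

section Distortion

theorem norm_distortion_le {M : ℝ} (hM : ∀ x ∈ P.domain, ‖P.m x‖ ≤ M) (lam : ℝ)
    (hx : x ∈ P.domain) : ‖P.distortion lam x‖ ≤ M * (P.b - P.a) := by
  have hM₀ : 0 ≤ M := (norm_nonneg _).trans (hM x hx)
  calc ‖P.distortion lam x‖ ≤ M * |x - P.a| := by
        refine intervalIntegral.norm_integral_le_of_norm_le_const fun y hy ↦ ?_
        rw [uIoc_of_le hx.1] at hy
        rw [norm_mul, Complex.norm_exp_ofReal_mul_I, mul_one]
        exact hM y ⟨hy.1.le, hy.2.trans hx.2⟩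
    _ ≤ M * (P.b - P.a) := by
        rw [abs_of_nonneg (sub_nonneg.2 hx.1)]
        gcongr
        exact hx.2

theorem neg_two_mul_distortion_eq (lam : ℝ) (hx : x ∈ P.domain) :
    -2 * (lam * P.distortion lam x) =
      ∫ y in P.a..x, (P.ρ y)⁻¹ • P.m y * (-2 * lam * P.ρ y : ℝ) * Complex.exp
        ((2 * (P.gauge y + P.α - (P.distortion lam y).im) + -2 * lam * P.arc y : ℝ) *
          Complex.I) := by
  rw [← mul_assoc, distortion, ← intervalIntegral.integral_const_mul]
  refine intervalIntegral.integral_congr fun y hy ↦ ?_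
  have hy : y ∈ P.domain := Icc_subset_Icc_right hx.2 (uIcc_of_le hx.1 ▸ hy)
  have hρ : (P.ρ y : ℂ) ≠ 0 := by exact_mod_cast (P.ρ_pos y hy).ne'
  simp only [P.phase_eq lam hy, Complex.real_smul]
  push_cast
  rw [mul_comm ((P.ρ y : ℂ)⁻¹)]
  field_simp
  ring_nf

/- Riemann–Lebesgue with a rate: `phase lam` is `lam * arc` plus a function whose derivative is
bounded uniformly in `lam`, so one integration by parts against `exp (-2 i lam * arc)` suffices. -/
theorem exists_norm_mul_distortion_le :
    ∃ K, ∀ lam, ∀ x ∈ P.domain, ‖lam * P.distortion lam x‖ ≤ K := by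
  set κ : ℝ → ℂ := fun x ↦ (P.ρ x)⁻¹ • P.m x
  have hκ : ContDiffOn ℝ 1 κ P.domain :=
    (P.contDiffOn_ρ.inv fun x hx ↦ (P.ρ_pos x hx).ne').smul P.contDiffOn_m
  set κ' := derivWithin κ P.domain
  have hκ' : ContinuousOn κ' P.domain :=
    hκ.continuousOn_derivWithin (uniqueDiffOn_Icc P.a_lt_b) le_rfl
  obtain ⟨N, hN⟩ := P.exists_norm_le hκ.continuousOn
  obtain ⟨N', hN'⟩ := P.exists_norm_le hκ'
  obtain ⟨M, hM⟩ := P.exists_norm_le P.continuousOn_m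
  obtain ⟨S, hS⟩ := P.exists_norm_le P.continuousOn_s
  refine ⟨2 * N + (N' + N * (2 * (S + M))) * (P.b - P.a), fun lam x hx ↦ ?_⟩
  have hsub : Icc P.a x ⊆ P.domain := Icc_subset_Icc_right hx.2
  have hparts := norm_integral_mul_exp_add_le (N := N) (N' := N') (L := 2 * (S + M)) hx.1
    (fun y hy ↦ (hκ.differentiableOn one_ne_zero y (hsub hy)).hasDerivWithinAt.mono hsub)
    (hκ'.mono hsub)
    (fun y hy ↦ (((P.hasDerivWithinAt_gauge (hsub hy)).add_const P.α).fun_sub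
      (P.hasDerivWithinAt_im_distortion lam (hsub hy))).const_mul 2 |>.mono hsub)
    (((P.continuousOn_s.sub (Complex.continuous_im.comp_continuousOn
      (P.continuousOn_m_mul_exp_phase lam))).const_mul 2).mono hsub)
    (fun y hy ↦ ((P.hasDerivWithinAt_arc (hsub hy)).const_mul (-2 * lam)).mono hsub)
    ((P.continuousOn_ρ.const_mul _).mono hsub)
    (fun y hy ↦ hN y (hsub hy)) (fun y hy ↦ hN' y (hsub hy)) (fun y hy ↦ ?_)
  · rw [← P.neg_two_mul_distortion_eq lam hx, norm_mul, norm_neg, Complex.norm_ofNat] at hparts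
    have : (N' + N * (2 * (S + M))) * (x - P.a) ≤ (N' + N * (2 * (S + M))) * (P.b - P.a) := by
      gcongr
      exact hx.2
    linarith [norm_nonneg (lam * P.distortion lam x)]
  · rw [abs_mul, abs_two]
    gcongr
    refine (abs_sub _ _).trans (add_le_add (hS y (hsub hy)) ((Complex.abs_im_le_norm _).trans ?_))
    simpa only [norm_mul, Complex.norm_exp_ofReal_mul_I, mul_one] using hM y (hsub hy)

theorem exists_one_add_abs_mul_norm_distortion_le :
    ∃ K, ∀ lam, ∀ x ∈ P.domain, (1 + |lam|) * ‖P.distortion lam x‖ ≤ K := by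
  obtain ⟨M, hM⟩ := P.exists_norm_le P.continuousOn_m
  obtain ⟨K, hK⟩ := P.exists_norm_mul_distortion_le
  refine ⟨M * (P.b - P.a) + K, fun lam x hx ↦ ?_⟩
  rw [add_mul, one_mul]
  exact add_le_add (P.norm_distortion_le hM lam hx) (by simpa using hK lam x hx)

end Distortion

section Eigenvalues

variable {z : ℝ → ℂ}

theorem surjective_phase_b : Function.Surjective fun lam ↦ P.phase lam P.b := by
  obtain ⟨M, hM⟩ := P.exists_norm_le P.continuousOn_m
  have hclose (lam : ℝ) : |P.phase lam P.b - (lam * P.arc P.b - P.gauge P.b - P.α)| ≤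
      M * (P.b - P.a) := by
    rw [P.phase_eq lam P.b_mem, add_sub_cancel_left]
    exact (Complex.abs_im_le_norm _).trans (P.norm_distortion_le hM lam P.b_mem)
  refine P.continuous_phase_b.surjective ?_ ?_
  · refine tendsto_atTop_mono (fun lam ↦ ?_) (tendsto_atTop_add_const_right _
      (-P.gauge P.b - P.α - M * (P.b - P.a)) (tendsto_id.atTop_mul_const P.arc_b_pos))
    rw [id_eq]
    linarith [neg_le_of_abs_le (hclose lam)]
  · refine tendsto_atBot_mono (fun lam ↦ ?_) (tendsto_atBot_add_const_right _
      (-P.gauge P.b - P.α + M * (P.b - P.a)) (tendsto_id.atBot_mul_const P.arc_b_pos))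
    rw [id_eq]
    linarith [le_of_abs_le (hclose lam)]

/-- The Prüfer angle at `b`, as an order isomorphism in the spectral parameter. -/
noncomputable def phaseIso : ℝ ≃o ℝ :=
  P.strictMono_phase_b.orderIsoOfSurjective _ P.surjective_phase_b

/-- The canonical listing of the eigenvalues, indexed by the value of the Prüfer angle at `b`. -/
noncomputable def eigenvalue (k : ℤ) : ℝ := P.phaseIso.symm (k * Real.pi - P.β)

theorem phase_eigenvalue_b (k : ℤ) : P.phase (P.eigenvalue k) P.b = k * Real.pi - P.β :=
  P.phaseIso.apply_symm_apply _

theorem strictMono_eigenvalue : StrictMono P.eigenvalue := fun k l hkl ↦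
  P.phaseIso.symm.strictMono (by gcongr)

theorem eigenvalue_mul_arc_b (k : ℤ) : P.eigenvalue k * P.arc P.b =
    k * Real.pi + P.α - P.β + P.gauge P.b - (P.distortion (P.eigenvalue k) P.b).im := by
  linarith [P.phase_eigenvalue_b k, P.phase_eq (P.eigenvalue k) P.b_mem]

/-- The separated boundary conditions. -/
def SatisfiesBC (z : ℝ → ℂ) : Prop :=
  (z P.a * Complex.exp (P.α * Complex.I)).im = 0 ∧ (z P.b * Complex.exp (P.β * Complex.I)).im = 0

theorem satisfiesBC_prueferSolution_iff {lam : ℝ} :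
    P.SatisfiesBC (P.prueferSolution lam) ↔ Real.sin (P.phase lam P.b + P.β) = 0 := by
  have ha : P.prueferSolution lam P.a * Complex.exp (P.α * Complex.I) = 1 := by
    rw [prueferSolution_a, ← Complex.exp_add]
    simp
  rw [SatisfiesBC, ha, P.prueferSolution_eq lam P.b_mem, mul_assoc, ← Complex.exp_add, ← add_mul,
    ← Complex.ofReal_add, Complex.im_ofReal_mul, Complex.exp_ofReal_mul_I_im]
  simp

theorem satisfiesBC_prueferSolution_eigenvalue (k : ℤ) :
    P.SatisfiesBC (P.prueferSolution (P.eigenvalue k)) := by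
  rw [satisfiesBC_prueferSolution_iff, phase_eigenvalue_b, sub_add_cancel, Real.sin_int_mul_pi]

variable {P} in
theorem IsSolution.exists_eigenvalue_eq {lam : ℝ} (hz : P.IsSolution lam z)
    (hbc : P.SatisfiesBC z) (hne : ∃ x ∈ P.domain, z x ≠ 0) :
    ∃ k : ℤ, lam = P.eigenvalue k := by
  obtain ⟨c, hc⟩ := hz.exists_eq_smul_prueferSolution hbc.1
  obtain ⟨x, hx, hzx⟩ := hne
  have hc₀ : c ≠ 0 := by
    rintro rfl
    exact hzx (by simpa using hc x hx)
  have hbc' : P.SatisfiesBC (P.prueferSolution lam) := by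
    simpa [SatisfiesBC, hc _ P.a_mem, hc _ P.b_mem, mul_assoc, Complex.im_ofReal_mul, hc₀]
      using hbc
  obtain ⟨k, hk⟩ := Real.sin_eq_zero_iff.1 (P.satisfiesBC_prueferSolution_iff.1 hbc')
  exact ⟨k, (P.phaseIso.symm_apply_eq.2 (sub_eq_of_eq_add hk)).symm⟩

end Eigenvalues

section Asymptotics

/-- The squared norm of `z` in `L²(ρ dx)`. -/
noncomputable def massOf (z : ℝ → ℂ) : ℝ := ∫ x in P.a..P.b, P.ρ x * ‖z x‖ ^ 2

/-- The normalized eigenfunction for `P.eigenvalue k`. -/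
noncomputable def eigenfunction (k : ℤ) (x : ℝ) : ℂ :=
  (√(P.massOf (P.prueferSolution (P.eigenvalue k))))⁻¹ • P.prueferSolution (P.eigenvalue k) x

/-- The Prüfer angle of the `k`-th eigenfunction when `m = 0`. -/
noncomputable def freePhase (k : ℤ) (x : ℝ) : ℝ :=
  (k * Real.pi + P.α - P.β + P.gauge P.b) * (P.arc x / P.arc P.b) - P.gauge x - P.α

/-- The `k`-th normalized eigenfunction when `m = 0`. -/
noncomputable def freeEigenfunction (k : ℤ) (x : ℝ) : ℂ :=
  (√(P.arc P.b))⁻¹ • Complex.exp (P.freePhase k x * Complex.I)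

theorem exists_one_add_abs_mul_norm_distortion_eigenvalue_le :
    ∃ K, ∀ k : ℤ, ∀ x ∈ P.domain, (1 + |(k : ℝ)|) * ‖P.distortion (P.eigenvalue k) x‖ ≤ K := by
  obtain ⟨M, hM⟩ := P.exists_norm_le P.continuousOn_m
  obtain ⟨K, hK⟩ := P.exists_one_add_abs_mul_norm_distortion_le
  have hgrowth (k : ℤ) : 1 + |(k : ℝ)| ≤
      (1 + P.arc P.b + |P.α - P.β + P.gauge P.b| + M * (P.b - P.a)) * (1 + |P.eigenvalue k|) := by
    have hkπ : k * Real.pi = P.eigenvalue k * P.arc P.b - (P.α - P.β + P.gauge P.b) +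
        (P.distortion (P.eigenvalue k) P.b).im := by
      linarith [P.eigenvalue_mul_arc_b k]
    have hk : |(k : ℝ)| ≤ |k * Real.pi| := by
      rw [abs_mul, abs_of_pos Real.pi_pos]
      exact le_mul_of_one_le_right (abs_nonneg _) (by linarith [Real.pi_gt_three])
    have him := (Complex.abs_im_le_norm _).trans
      (P.norm_distortion_le hM (P.eigenvalue k) P.b_mem)
    have htri := (hkπ ▸ hk).trans ((abs_add_le _ _).trans (add_le_add (abs_sub _ _) him))
    rw [abs_mul, abs_of_pos P.arc_b_pos] at htri
    have hlam : 0 ≤ (1 + |P.α - P.β + P.gauge P.b| + M * (P.b - P.a)) * |P.eigenvalue k| := by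
      have := sub_nonneg.2 P.a_lt_b.le
      positivity
    linarith [P.arc_b_pos]
  refine ⟨(1 + P.arc P.b + |P.α - P.β + P.gauge P.b| + M * (P.b - P.a)) * K, fun k x hx ↦ ?_⟩
  calc _ ≤ (1 + P.arc P.b + |P.α - P.β + P.gauge P.b| + M * (P.b - P.a)) *
        (1 + |P.eigenvalue k|) * ‖P.distortion (P.eigenvalue k) x‖ := by
        gcongr
        exact hgrowth k
    _ ≤ _ := by
        have := P.arc_b_pos
        have := sub_nonneg.2 P.a_lt_b.le
        rw [mul_assoc]
        gcongr
        exact hK _ x hx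

theorem massOf_prueferSolution_mem_Icc {lam η : ℝ}
    (hη : ∀ x ∈ P.domain, ‖P.distortion lam x‖ ≤ η) :
    P.massOf (P.prueferSolution lam) ∈
      Icc (P.arc P.b * Real.exp (-2 * η)) (P.arc P.b * Real.exp (2 * η)) := by
  have hnorm : ∀ x ∈ P.domain, ‖P.prueferSolution lam x‖ ^ 2 =
      Real.exp (2 * (P.distortion lam x).re) := fun x hx ↦ by
    rw [P.prueferSolution_eq lam hx, norm_mul, Complex.norm_exp_ofReal_mul_I, Complex.norm_real,
      Real.norm_eq_abs, Real.abs_exp, mul_one, ← Real.exp_nat_mul, Nat.cast_ofNat]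
  have hre : ∀ x ∈ P.domain, |(P.distortion lam x).re| ≤ η := fun x hx ↦
    (Complex.abs_re_le_norm _).trans (hη x hx)
  have hρ : IntervalIntegrable P.ρ volume P.a P.b :=
    P.continuousOn_ρ.intervalIntegrable_of_Icc P.a_lt_b.le
  have hint : IntervalIntegrable (fun x ↦ P.ρ x * ‖P.prueferSolution lam x‖ ^ 2) volume P.a P.b :=
    (P.continuousOn_ρ.mul ((P.isSolution_prueferSolution lam).continuousOn.norm.pow 2)
      ).intervalIntegrable_of_Icc P.a_lt_b.le
  rw [arc, ← intervalIntegral.integral_mul_const, ← intervalIntegral.integral_mul_const]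
  constructor
  · refine intervalIntegral.integral_mono_on P.a_lt_b.le (hρ.mul_const _) hint fun x hx ↦ ?_
    rw [hnorm x hx]
    refine mul_le_mul_of_nonneg_left (Real.exp_le_exp.2 ?_) (P.ρ_pos x hx).le
    linarith [neg_le_of_abs_le (hre x hx)]
  · refine intervalIntegral.integral_mono_on P.a_lt_b.le hint (hρ.mul_const _) fun x hx ↦ ?_
    rw [hnorm x hx]
    refine mul_le_mul_of_nonneg_left (Real.exp_le_exp.2 ?_) (P.ρ_pos x hx).le
    linarith [le_of_abs_le (hre x hx)]

theorem massOf_prueferSolution_pos (lam : ℝ) : 0 < P.massOf (P.prueferSolution lam) := by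
  obtain ⟨η, hη⟩ := P.exists_norm_le (P.continuousOn_distortion lam)
  exact (mul_pos P.arc_b_pos (Real.exp_pos _)).trans_le
    (P.massOf_prueferSolution_mem_Icc hη).1

/-- The logarithm of the ratio of `P.eigenfunction k` to `P.freeEigenfunction k`. -/
noncomputable def logRatio (k : ℤ) (x : ℝ) : ℂ :=
  P.distortion (P.eigenvalue k) x
    - ((P.distortion (P.eigenvalue k) P.b).im * (P.arc x / P.arc P.b) : ℝ) * Complex.I
    - (Real.log (P.massOf (P.prueferSolution (P.eigenvalue k)) / P.arc P.b) / 2 : ℝ)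

theorem eigenfunction_eq (k : ℤ) (x : ℝ) :
    P.eigenfunction k x = P.freeEigenfunction k x * Complex.exp (P.logRatio k x) := by
  have hΞ := P.arc_b_pos
  have hN := P.massOf_prueferSolution_pos (P.eigenvalue k)
  have hmass : (√(P.massOf (P.prueferSolution (P.eigenvalue k))))⁻¹ = (√(P.arc P.b))⁻¹ *
      Real.exp (-(Real.log (P.massOf (P.prueferSolution (P.eigenvalue k)) / P.arc P.b) / 2)) := by
    rw [Real.exp_neg, Real.exp_half, Real.exp_log (div_pos hN hΞ), Real.sqrt_div' _ hΞ.le]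
    field_simp
  have hfree : P.eigenvalue k * P.arc x - P.gauge x - P.α = P.freePhase k x -
      (P.distortion (P.eigenvalue k) P.b).im * (P.arc x / P.arc P.b) := by
    rw [freePhase]
    field_simp
    linear_combination P.arc x * P.eigenvalue_mul_arc_b k
  rw [eigenfunction, freeEigenfunction, hmass, prueferSolution, hfree, logRatio, mul_smul,
    smul_mul_assoc, ← Complex.exp_add, Complex.real_smul (x := Real.exp _), Complex.ofReal_exp,
    ← Complex.exp_add]
  push_cast
  ring_nf

theorem norm_logRatio_le {k : ℤ} {η : ℝ}
    (hη : ∀ x ∈ P.domain, ‖P.distortion (P.eigenvalue k) x‖ ≤ η) (hx : x ∈ P.domain) :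
    ‖P.logRatio k x‖ ≤ 3 * η := by
  have hΞ := P.arc_b_pos
  obtain ⟨hlo, hhi⟩ := P.massOf_prueferSolution_mem_Icc hη
  have hlog : |Real.log (P.massOf (P.prueferSolution (P.eigenvalue k)) / P.arc P.b) / 2| ≤ η := by
    have hpos := div_pos (P.massOf_prueferSolution_pos (P.eigenvalue k)) hΞ
    have hlo' := (Real.le_log_iff_exp_le hpos).2 ((le_div_iff₀' hΞ).2 hlo)
    have hhi' := (Real.log_le_iff_le_exp hpos).2 ((div_le_iff₀' hΞ).2 hhi)
    exact abs_le.2 ⟨by linarith, by linarith⟩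
  have hdrift : |(P.distortion (P.eigenvalue k) P.b).im * (P.arc x / P.arc P.b)| ≤ η := by
    obtain ⟨h₀, h₁⟩ := P.arc_mem_Icc hx
    rw [abs_mul, abs_of_nonneg (div_nonneg h₀ hΞ.le)]
    exact (mul_le_of_le_one_right (abs_nonneg _) (div_le_one_of_le₀ h₁ hΞ.le)).trans
      ((Complex.abs_im_le_norm _).trans (hη _ P.b_mem))
  calc ‖P.logRatio k x‖ ≤ η + η + η := by
        refine (norm_sub_le _ _).trans (add_le_add ((norm_sub_le _ _).trans
          (add_le_add (hη x hx) ?_)) ?_)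
        · rwa [norm_mul, Complex.norm_I, mul_one, Complex.norm_real]
        · rwa [Complex.norm_real]
    _ = 3 * η := by ring

theorem norm_freeEigenfunction (k : ℤ) (x : ℝ) :
    ‖P.freeEigenfunction k x‖ = (√(P.arc P.b))⁻¹ := by
  rw [freeEigenfunction, norm_smul, Complex.norm_exp_ofReal_mul_I, mul_one, norm_inv,
    Real.norm_of_nonneg (Real.sqrt_nonneg _)]

theorem exists_one_add_abs_mul_norm_eigenfunction_sub_le : ∃ K, ∀ k : ℤ, ∀ x ∈ P.domain,
    (1 + |(k : ℝ)|) * ‖P.eigenfunction k x - P.freeEigenfunction k x‖ ≤ K := by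
  obtain ⟨K, hK⟩ := P.exists_one_add_abs_mul_norm_distortion_eigenvalue_le
  refine ⟨(√(P.arc P.b))⁻¹ * (3 * K * Real.exp (3 * K)), fun k x hx ↦ ?_⟩
  have hk : 0 < 1 + |(k : ℝ)| := by positivity
  have hlog : ‖P.logRatio k x‖ ≤ 3 * (K / (1 + |(k : ℝ)|)) :=
    P.norm_logRatio_le (fun y hy ↦ (le_div_iff₀' hk).2 (hK k y hy)) hx
  have hK₀ : 0 ≤ K := (mul_nonneg hk.le (norm_nonneg _)).trans (hK k x hx)
  have hlog' : (1 + |(k : ℝ)|) * ‖P.logRatio k x‖ ≤ 3 * K := by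
    calc _ ≤ (1 + |(k : ℝ)|) * (3 * (K / (1 + |(k : ℝ)|))) := by gcongr
      _ = 3 * K := by field_simp
  have hlog₁ : ‖P.logRatio k x‖ ≤ 3 * K :=
    (le_mul_of_one_le_left (norm_nonneg _) (by simp)).trans hlog'
  have hexp : ‖Complex.exp (P.logRatio k x) - 1‖ ≤
      ‖P.logRatio k x‖ * Real.exp ‖P.logRatio k x‖ := by
    simpa using Complex.norm_exp_sub_sum_le_norm_mul_exp (P.logRatio k x) 1
  calc (1 + |(k : ℝ)|) * ‖P.eigenfunction k x - P.freeEigenfunction k x‖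
      = (√(P.arc P.b))⁻¹ * ((1 + |(k : ℝ)|) * ‖Complex.exp (P.logRatio k x) - 1‖) := by
        rw [eigenfunction_eq, ← mul_sub_one, norm_mul, norm_freeEigenfunction, mul_left_comm]
    _ ≤ (√(P.arc P.b))⁻¹ * ((1 + |(k : ℝ)|) * ‖P.logRatio k x‖ * Real.exp ‖P.logRatio k x‖) := by
        rw [mul_assoc]
        gcongr
    _ ≤ (√(P.arc P.b))⁻¹ * (3 * K * Real.exp (3 * K)) := by gcongr

end Asymptotics

section WeightedL2

instance : CompactSpace P.domain := isCompact_iff_compactSpace.1 isCompact_Icc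

/-- The measure `ρ dx` on the interval `[a, b]`, viewed as a compact space. -/
noncomputable def weightedVolume : Measure P.domain :=
  (volume.comap ((↑) : P.domain → ℝ)).withDensity fun x ↦ ENNReal.ofReal (P.ρ x)

theorem measurableSet_domain : MeasurableSet P.domain := measurableSet_Icc

theorem continuous_ρ_restrict : Continuous fun x : P.domain ↦ P.ρ x := P.continuousOn_ρ.domRestrict

instance : IsFiniteMeasure (volume.comap ((↑) : P.domain → ℝ)) where
  measure_univ_lt_top := by
    rw [comap_subtype_coe_apply P.measurableSet_domain, image_univ, Subtype.range_coe]
    exact measure_Icc_lt_top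

instance : IsFiniteMeasure P.weightedVolume :=
  isFiniteMeasure_withDensity_ofReal (P.continuous_ρ_restrict.integrable_of_hasCompactSupport
    (HasCompactSupport.of_compactSpace _)).2

instance : (volume.comap ((↑) : P.domain → ℝ)).IsOpenPosMeasure where
  open_pos := by
    rintro U hU ⟨x, hx⟩
    obtain ⟨V, hV, rfl⟩ := isOpen_induced_iff.1 hU
    have hx' : (x : ℝ) ∈ closure (Ioo P.a P.b) := by
      rw [closure_Ioo P.a_lt_b.ne]
      exact x.2
    rw [comap_subtype_coe_apply P.measurableSet_domain, Subtype.image_preimage_coe]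
    exact (measure_mono_null (inter_subset_inter_left V Ioo_subset_Icc_self)).mt
      ((isOpen_Ioo.inter hV).measure_ne_zero _ (by
        rw [inter_comm]
        exact mem_closure_iff.1 hx' V hV hx))

instance : P.weightedVolume.IsOpenPosMeasure :=
  (withDensity_absolutelyContinuous' P.continuous_ρ_restrict.measurable.ennreal_ofReal.aemeasurable
    (.of_forall fun x ↦ (ENNReal.ofReal_pos.2 (P.ρ_pos x x.2)).ne')).isOpenPosMeasure

theorem integral_weightedVolume (g : ℝ → ℝ) :
    ∫ x, g x ∂P.weightedVolume = ∫ x in P.a..P.b, P.ρ x * g x := by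
  rw [weightedVolume, integral_withDensity_eq_integral_toReal_smul
    P.continuous_ρ_restrict.measurable.ennreal_ofReal (.of_forall fun _ ↦ ENNReal.ofReal_lt_top)]
  have hρ (x : P.domain) : (ENNReal.ofReal (P.ρ x)).toReal = P.ρ x :=
    ENNReal.toReal_ofReal (P.ρ_pos x x.2).le
  simp_rw [hρ, smul_eq_mul]
  rw [integral_subtype_comap P.measurableSet_domain fun x ↦ P.ρ x * g x, domain,
    integral_Icc_eq_integral_Ioc, intervalIntegral.integral_of_le P.a_lt_b.le]

end WeightedL2

section Green

/-- The inner product of `L²(ρ dx)`, as a real Hilbert space. -/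
noncomputable def pairing (w z : ℝ → ℂ) : ℝ := ∫ x in P.a..P.b, P.ρ x * (conj (w x) * z x).re

/-- The boundary term in Green's identity. -/
noncomputable def boundaryForm (w z : ℝ → ℂ) : ℝ :=
  (conj (w P.b) * z P.b).im - (conj (w P.a) * z P.a).im

/-- The Dirac operator, normalized so that `P.IsSolution lam z` means `P.diracOp z = lam • z`. -/
noncomputable def diracOp (F : ℝ → ℂ) (x : ℝ) : ℂ :=
  (P.ρ x)⁻¹ • (-Complex.I *
    (derivWithin F P.domain x + Complex.I * P.s x * F x - P.m x * conj (F x)))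

theorem pairing_self (z : ℝ → ℂ) : P.pairing z z = P.massOf z := by
  simp_rw [pairing, massOf, Complex.conj_mul', ← Complex.ofReal_pow, Complex.ofReal_re]

variable {P} {F w z : ℝ → ℂ} {lam μ : ℝ}

theorem continuousOn_diracOp (hF : ContDiffOn ℝ 1 F P.domain) :
    ContinuousOn (P.diracOp F) P.domain :=
  (P.continuousOn_ρ.inv₀ fun x hx ↦ (P.ρ_pos x hx).ne').smul (continuousOn_const.mul
    (((hF.continuousOn_derivWithin (uniqueDiffOn_Icc P.a_lt_b) le_rfl).add
      ((continuousOn_const.mul (Complex.continuous_ofReal.comp_continuousOn P.continuousOn_s)).mul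
        hF.continuousOn)).sub
      (P.continuousOn_m.mul (Complex.continuous_conj.comp_continuousOn hF.continuousOn))))

theorem continuousOn_ρ_mul_re_conj_mul (hw : ContinuousOn w P.domain)
    (hz : ContinuousOn z P.domain) :
    ContinuousOn (fun x ↦ P.ρ x * (conj (w x) * z x).re) P.domain :=
  P.continuousOn_ρ.mul (Complex.continuous_re.comp_continuousOn
    ((Complex.continuous_conj.comp_continuousOn hw).mul hz))

theorem IsSolution.sub_mul_pairing (hz : P.IsSolution lam z) (hw : P.IsSolution μ w) :
    (μ - lam) * P.pairing z w = P.boundaryForm z w := by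
  rw [boundaryForm, ← integral_eq_sub_of_hasDerivWithinAt_Icc
    (fun x hx ↦ hz.hasDerivWithinAt_im_conj_mul_isSolution hw hx)
    (continuousOn_const.mul (continuousOn_ρ_mul_re_conj_mul hz.continuousOn hw.continuousOn))
    P.b_mem,
    intervalIntegral.integral_const_mul, pairing]

theorem IsSolution.mul_pairing (hz : P.IsSolution lam z) (hF : ContDiffOn ℝ 1 F P.domain) :
    lam * P.pairing z F = P.pairing z (P.diracOp F) - P.boundaryForm z F := by
  have hder : ∀ x ∈ P.domain, HasDerivWithinAt (fun x ↦ (conj (z x) * F x).im)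
      (P.ρ x * (conj (z x) * P.diracOp F x).re - lam * (P.ρ x * (conj (z x) * F x).re))
      P.domain x := fun x hx ↦ by
    refine (hz.hasDerivWithinAt_im_conj_mul hx
      (hF.differentiableOn one_ne_zero x hx).hasDerivWithinAt).congr_deriv ?_
    rw [diracOp, mul_smul_comm, Complex.smul_re, smul_eq_mul,
      mul_inv_cancel_left₀ (P.ρ_pos x hx).ne', mul_left_comm (conj (z x)), neg_mul,
      Complex.neg_re, Complex.I_mul_re, neg_neg]
  have hcont := continuousOn_ρ_mul_re_conj_mul hz.continuousOn hF.continuousOn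
  have hcont' := continuousOn_ρ_mul_re_conj_mul hz.continuousOn (continuousOn_diracOp hF)
  rw [boundaryForm, ← integral_eq_sub_of_hasDerivWithinAt_Icc hder
      (hcont'.sub (continuousOn_const.mul hcont)) P.b_mem,
    intervalIntegral.integral_sub (hcont'.intervalIntegrable_of_Icc P.a_lt_b.le)
      ((hcont.intervalIntegrable_of_Icc P.a_lt_b.le).const_mul lam),
    intervalIntegral.integral_const_mul, pairing, pairing, sub_sub_cancel]

theorem SatisfiesBC.boundaryForm_eq_zero (hw : P.SatisfiesBC w) (hz : P.SatisfiesBC z) :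
    P.boundaryForm w z = 0 := by
  have him {u v : ℂ} {θ : ℝ} (hu : (u * Complex.exp (θ * Complex.I)).im = 0)
      (hv : (v * Complex.exp (θ * Complex.I)).im = 0) : (conj u * v).im = 0 := by
    have hrot : conj (u * Complex.exp (θ * Complex.I)) * (v * Complex.exp (θ * Complex.I)) =
        conj u * v := by
      rw [map_mul, mul_mul_mul_comm, Complex.conj_mul', Complex.norm_exp_ofReal_mul_I]
      simp
    rw [← hrot, Complex.mul_im, Complex.conj_im, hu, hv]
    simp
  rw [boundaryForm, him hw.2 hz.2, him hw.1 hz.1, sub_zero]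

end Green

section Orthonormality

variable {P} in
theorem IsSolution.const_smul {lam : ℝ} {z : ℝ → ℂ} (hz : P.IsSolution lam z) (c : ℝ) :
    P.IsSolution lam fun x ↦ c • z x := fun x hx ↦
  ((hz x hx).fun_const_smul c).congr_deriv <| by
    simp only [Complex.real_smul, map_mul, Complex.conj_ofReal]
    ring

theorem isSolution_eigenfunction (k : ℤ) : P.IsSolution (P.eigenvalue k) (P.eigenfunction k) :=
  (P.isSolution_prueferSolution (P.eigenvalue k)).const_smul _

theorem continuousOn_eigenfunction (k : ℤ) : ContinuousOn (P.eigenfunction k) P.domain :=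
  (P.isSolution_eigenfunction k).continuousOn

theorem satisfiesBC_eigenfunction (k : ℤ) : P.SatisfiesBC (P.eigenfunction k) := by
  obtain ⟨ha, hb⟩ := P.satisfiesBC_prueferSolution_eigenvalue k
  simp_rw [SatisfiesBC, eigenfunction, smul_mul_assoc, Complex.smul_im, ha, hb, smul_zero, and_self]

theorem massOf_eigenfunction (k : ℤ) : P.massOf (P.eigenfunction k) = 1 := by
  have hpos := P.massOf_prueferSolution_pos (P.eigenvalue k)
  have hsq (x : ℝ) : P.ρ x * ‖P.eigenfunction k x‖ ^ 2 =
      (P.massOf (P.prueferSolution (P.eigenvalue k)))⁻¹ *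
        (P.ρ x * ‖P.prueferSolution (P.eigenvalue k) x‖ ^ 2) := by
    rw [eigenfunction, norm_smul, mul_pow, norm_inv, Real.norm_eq_abs, inv_pow, sq_abs,
      Real.sq_sqrt hpos.le, mul_left_comm]
  simp_rw [massOf, hsq, intervalIntegral.integral_const_mul]
  exact inv_mul_cancel₀ hpos.ne'

theorem pairing_eigenfunction (k l : ℤ) :
    P.pairing (P.eigenfunction k) (P.eigenfunction l) = if k = l then 1 else 0 := by
  split_ifs with hkl
  · rw [hkl, pairing_self, massOf_eigenfunction]
  · have hWronskian := (P.isSolution_eigenfunction k).sub_mul_pairing (P.isSolution_eigenfunction l)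
    rw [(P.satisfiesBC_eigenfunction k).boundaryForm_eq_zero (P.satisfiesBC_eigenfunction l),
      mul_eq_zero, sub_eq_zero, P.strictMono_eigenvalue.injective.eq_iff] at hWronskian
    exact hWronskian.resolve_left (Ne.symm hkl)

end Orthonormality

section HilbertBasis

/-- A function that is continuous on the interval, as an element of `C([a, b], ℂ)`. -/
def toContinuousMap (z : ℝ → ℂ) (hz : ContinuousOn z P.domain) : C(P.domain, ℂ) :=
  ⟨P.domain.domRestrict z, hz.domRestrict⟩

/-- The inclusion of `C([a, b], ℂ)` into the *real* Hilbert space `L²([a, b], ℂ, ρ dx)`. -/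
noncomputable abbrev toL2 : C(P.domain, ℂ) →L[ℝ] Lp ℂ 2 P.weightedVolume :=
  ContinuousMap.toLp 2 P.weightedVolume ℝ

variable {P} in
theorem inner_toL2_toContinuousMap {w z : ℝ → ℂ} (hw : ContinuousOn w P.domain)
    (hz : ContinuousOn z P.domain) :
    inner ℝ (P.toL2 (P.toContinuousMap w hw)) (P.toL2 (P.toContinuousMap z hz)) = P.pairing w z :=
  (inner_toLp_toLp _ _).trans (P.integral_weightedVolume fun x ↦ (conj (w x) * z x).re)

/-- The eigenfunction `P.eigenfunction k` as an element of `C([a, b], ℂ)`. -/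
noncomputable def eigenmode (k : ℤ) : C(P.domain, ℂ) :=
  P.toContinuousMap (P.eigenfunction k) (P.continuousOn_eigenfunction k)

theorem orthonormal_eigenmode : Orthonormal ℝ fun k ↦ P.toL2 (P.eigenmode k) :=
  orthonormal_iff_ite.2 fun k l ↦ by
    rw [eigenmode, eigenmode, inner_toL2_toContinuousMap, pairing_eigenfunction]

/-- The problem obtained from `P` by setting `m = 0`. -/
noncomputable def free : DiracProblem where
  __ := P
  m := 0
  contDiffOn_m := contDiffOn_const

theorem distortion_free (lam x : ℝ) : P.free.distortion lam x = 0 := by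
  simp [distortion, free]

theorem eigenfunction_free (k : ℤ) (hx : x ∈ P.domain) :
    P.free.eigenfunction k x = P.freeEigenfunction k x := by
  have hlog : P.free.logRatio k x = 0 := norm_le_zero_iff.1 <| by
    simpa using P.free.norm_logRatio_le (k := k) (η := 0) (by simp [distortion_free]) hx
  rw [eigenfunction_eq, hlog, Complex.exp_zero, mul_one]
  rfl

/-- The `ρ`-length of `[a, x]`, rescaled to run from `0` to `π`. -/
noncomputable def angle : C(P.domain, ℝ) :=
  ⟨fun x ↦ Real.pi * (P.arc x / P.arc P.b),
    (P.continuousOn_arc.div_const _).domRestrict.const_mul _⟩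

theorem angle_apply (x : P.domain) : P.angle x = Real.pi * (P.arc x / P.arc P.b) := rfl

/-- The part of `P.freePhase k` that does not depend on `k`. -/
noncomputable def offset : C(P.domain, ℝ) :=
  ⟨P.domain.domRestrict (P.freePhase 0), ContinuousOn.domRestrict
    (((continuousOn_const.mul (P.continuousOn_arc.div_const _)).sub P.continuousOn_gauge).sub
      continuousOn_const)⟩

theorem freePhase_eq (k : ℤ) (x : P.domain) :
    P.freePhase k x = (P.offset + k • P.angle) x := by
  rw [ContinuousMap.add_apply, ContinuousMap.coe_zsmul, Pi.smul_apply, angle_apply]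
  simp only [offset, freePhase, ContinuousMap.coe_mk, domRestrict_apply, zsmul_eq_mul,
    Int.cast_zero]
  ring

/-- The free eigenfunction `P.freeEigenfunction k` as an element of `C([a, b], ℂ)`. -/
noncomputable def freeMode (k : ℤ) : C(P.domain, ℂ) :=
  (√(P.arc P.b))⁻¹ • expMulI (P.offset + k • P.angle)

theorem freeMode_apply (k : ℤ) (x : P.domain) : P.freeMode k x = P.freeEigenfunction k x := by
  rw [freeEigenfunction, freePhase_eq]
  rfl

theorem eigenmode_free (k : ℤ) : P.free.eigenmode k = P.freeMode k :=
  ContinuousMap.ext fun x ↦ (P.eigenfunction_free k x.2).trans (P.freeMode_apply k x).symm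

theorem orthonormal_freeMode : Orthonormal ℝ fun k ↦ P.toL2 (P.freeMode k) := by
  simp_rw [← eigenmode_free]
  exact P.free.orthonormal_eigenmode

theorem injective_cos_angle : Function.Injective fun x ↦ Real.cos (P.angle x) := fun x y hxy ↦ by
  have hmem (x : P.domain) : P.angle x ∈ Icc 0 Real.pi := by
    obtain ⟨h₀, h₁⟩ := P.arc_mem_Icc x.2
    exact ⟨mul_nonneg Real.pi_pos.le (div_nonneg h₀ P.arc_b_pos.le),
      mul_le_of_le_one_right Real.pi_pos.le (div_le_one_of_le₀ h₁ P.arc_b_pos.le)⟩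
  have hangle := mul_left_cancel₀ Real.pi_ne_zero (Real.injOn_cos (hmem x) (hmem y) hxy)
  exact Subtype.ext (P.strictMonoOn_arc.injOn x.2 y.2 ((div_left_inj' P.arc_b_pos.ne').1 hangle))

theorem angle_mem_Ioo {x : P.domain} (hx : (x : ℝ) ∈ Ioo P.a P.b) :
    P.angle x ∈ Ioo 0 Real.pi := by
  obtain ⟨h₀, h₁⟩ := P.arc_mem_Ioo hx
  exact ⟨mul_pos Real.pi_pos (div_pos h₀ P.arc_b_pos),
    mul_lt_of_lt_one_right Real.pi_pos ((div_lt_one P.arc_b_pos).2 h₁)⟩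

theorem ae_mem_Ioo : ∀ᵐ x : P.domain ∂P.weightedVolume, (x : ℝ) ∈ Ioo P.a P.b := by
  refine (withDensity_absolutelyContinuous _ _).ae_le
    (ae_iff.2 ((comap_subtype_coe_apply P.measurableSet_domain volume _).trans ?_))
  refine measure_mono_null (t := {P.a, P.b}) ?_ ((toFinite _).measure_zero _)
  rintro _ ⟨⟨x, hx⟩, hnot, rfl⟩
  by_contra hne
  rw [mem_insert_iff, mem_singleton_iff, not_or] at hne
  exact hnot ⟨hx.1.lt_of_ne' hne.1, hx.2.lt_of_ne hne.2⟩

theorem eq_zero_of_forall_inner_freeMode_eq_zero {h : Lp ℂ 2 P.weightedVolume}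
    (hh : ∀ k, inner ℝ h (P.toL2 (P.freeMode k)) = 0) : h = 0 := by
  have hsin : ∀ᵐ x : P.domain ∂P.weightedVolume, Real.sin (P.angle x) ≠ 0 := by
    filter_upwards [P.ae_mem_Ioo] with x hx
    obtain ⟨h₀, h₁⟩ := P.angle_mem_Ioo hx
    exact (Real.sin_pos_of_pos_of_lt_pi h₀ h₁).ne'
  refine eq_zero_of_forall_inner_expMulI_eq_zero (φ := P.angle) (ψ := P.offset)
    P.injective_cos_angle hsin fun k ↦ ?_
  have hk := hh k
  rw [freeMode, map_smul, inner_smul_right, mul_eq_zero] at hk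
  exact hk.resolve_left (inv_ne_zero (Real.sqrt_ne_zero'.2 P.arc_b_pos))

/-- The Hilbert basis of free eigenfunctions. -/
noncomputable def freeBasis : HilbertBasis ℤ ℝ (Lp ℂ 2 P.weightedVolume) :=
  .mkOfOrthogonalEqBot P.orthonormal_freeMode <| (Submodule.eq_bot_iff _).2 fun _ hh ↦
    P.eq_zero_of_forall_inner_freeMode_eq_zero fun k ↦
      (Submodule.mem_orthogonal' _ _).1 hh _ (Submodule.subset_span ⟨k, rfl⟩)

theorem freeBasis_apply (k : ℤ) : P.freeBasis k = P.toL2 (P.freeMode k) := by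
  rw [freeBasis, HilbertBasis.coe_mkOfOrthogonalEqBot]

theorem exists_one_add_abs_mul_norm_eigenmode_sub_le :
    ∃ K, ∀ k : ℤ, (1 + |(k : ℝ)|) * ‖P.eigenmode k - P.freeMode k‖ ≤ K := by
  obtain ⟨K, hK⟩ := P.exists_one_add_abs_mul_norm_eigenfunction_sub_le
  have hpos (k : ℤ) : 0 < 1 + |(k : ℝ)| := by positivity
  have hK₀ : 0 ≤ K := (mul_nonneg (hpos 0).le (norm_nonneg _)).trans (hK 0 _ P.a_mem)
  refine ⟨K, fun k ↦ (le_div_iff₀' (hpos k)).1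
    ((ContinuousMap.norm_le _ (div_nonneg hK₀ (hpos k).le)).2 fun x ↦ ?_)⟩
  rw [le_div_iff₀' (hpos k), ContinuousMap.sub_apply, freeMode_apply]
  exact hK k x x.2

theorem summable_norm_eigenmode_sub_freeMode_sq :
    Summable fun k ↦ ‖P.eigenmode k - P.freeMode k‖ ^ 2 := by
  obtain ⟨K, hK⟩ := P.exists_one_add_abs_mul_norm_eigenmode_sub_le
  refine .of_nonneg_of_le (fun _ ↦ sq_nonneg _) (fun k ↦ ?_)
    (summable_inv_one_add_abs_sq.mul_left (K ^ 2))
  have hpos : 0 < 1 + |(k : ℝ)| := by positivity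
  rw [← mul_pow, ← div_eq_mul_inv]
  exact pow_le_pow_left₀ (norm_nonneg _) ((le_div_iff₀' hpos).2 (hK k)) 2

theorem summable_norm_toL2_freeMode_sub_eigenmode_sq :
    Summable fun k ↦ ‖P.toL2 (P.freeMode k) - P.toL2 (P.eigenmode k)‖ ^ 2 := by
  refine .of_nonneg_of_le (fun _ ↦ sq_nonneg _) (fun k ↦ ?_)
    (P.summable_norm_eigenmode_sub_freeMode_sq.mul_left (‖P.toL2‖ ^ 2))
  rw [← mul_pow, norm_sub_rev, ← map_sub]
  exact pow_le_pow_left₀ (norm_nonneg _) (P.toL2.le_opNorm _) 2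

/-- The Hilbert basis of eigenfunctions. -/
noncomputable def eigenbasis : HilbertBasis ℤ ℝ (Lp ℂ 2 P.weightedVolume) :=
  .mkOfOrthogonalEqBot P.orthonormal_eigenmode <| (Submodule.eq_bot_iff _).2 fun _ hh ↦
    eq_zero_of_summable_norm_sub_sq P.freeBasis P.orthonormal_eigenmode
      (by simpa only [freeBasis_apply] using P.summable_norm_toL2_freeMode_sub_eigenmode_sq)
      fun k ↦ hh _ (Submodule.subset_span ⟨k, rfl⟩)

theorem eigenbasis_apply (k : ℤ) : P.eigenbasis k = P.toL2 (P.eigenmode k) := by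
  rw [eigenbasis, HilbertBasis.coe_mkOfOrthogonalEqBot]

end HilbertBasis

section Coefficients

theorem abs_boundaryForm_le (w z : ℝ → ℂ) :
    |P.boundaryForm w z| ≤ ‖w P.b‖ * ‖z P.b‖ + ‖w P.a‖ * ‖z P.a‖ := by
  have him (u v : ℂ) : |(conj u * v).im| ≤ ‖u‖ * ‖v‖ :=
    (Complex.abs_im_le_norm _).trans (by rw [norm_mul, Complex.norm_conj])
  exact (abs_sub _ _).trans (add_le_add (him _ _) (him _ _))

theorem boundaryForm_sub_left (v w z : ℝ → ℂ) :
    P.boundaryForm v z - P.boundaryForm w z = P.boundaryForm (v - w) z := by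
  simp only [boundaryForm, Pi.sub_apply, map_sub, sub_mul, Complex.sub_im]
  ring

theorem freePhase_a (k : ℤ) : P.freePhase k P.a = -P.α := by
  simp [freePhase, arc, gauge]

theorem freePhase_b (k : ℤ) : P.freePhase k P.b = k * Real.pi - P.β := by
  rw [freePhase, div_self P.arc_b_pos.ne']
  ring

theorem boundaryForm_freeEigenfunction (F : ℝ → ℂ) (k : ℤ) :
    P.boundaryForm (P.freeEigenfunction k) F = (√(P.arc P.b))⁻¹ *
      ((-1) ^ k * (Complex.exp (P.β * Complex.I) * F P.b).im -
        (Complex.exp (P.α * Complex.I) * F P.a).im) := by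
  have hconj (θ : ℝ) : conj (Complex.exp (θ * Complex.I)) = Complex.exp ((-θ : ℝ) * Complex.I) := by
    rw [← Complex.exp_conj]
    simp
  have hrot : Complex.exp ((-(k * Real.pi - P.β) : ℝ) * Complex.I) =
      ((-1) ^ k : ℝ) * Complex.exp (P.β * Complex.I) := by
    rw [show ((-(k * Real.pi - P.β) : ℝ) * Complex.I : ℂ) =
        (-k : ℤ) * (Real.pi * Complex.I) + P.β * Complex.I by push_cast; ring,
      Complex.exp_add, Complex.exp_int_mul, Complex.exp_pi_mul_I, zpow_neg, ← inv_zpow]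
    norm_num
  simp only [boundaryForm, freeEigenfunction, freePhase_a, freePhase_b, Complex.real_smul, map_mul,
    Complex.conj_ofReal, hconj, hrot, neg_neg, mul_assoc, Complex.im_ofReal_mul]
  ring

variable {P} {F : ℝ → ℂ}

theorem summable_pairing_eigenfunction_sq (hF : ContinuousOn F P.domain) :
    Summable fun k ↦ P.pairing (P.eigenfunction k) F ^ 2 := by
  refine (P.orthonormal_eigenmode.inner_products_summable
    (P.toL2 (P.toContinuousMap F hF))).congr fun k ↦ ?_
  rw [eigenmode, inner_toL2_toContinuousMap, Real.norm_eq_abs, sq_abs]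

theorem summable_boundaryForm_eigenfunction_sub_sq :
    Summable fun k ↦ (P.boundaryForm (P.eigenfunction k) F -
      P.boundaryForm (P.freeEigenfunction k) F) ^ 2 := by
  refine .of_nonneg_of_le (fun _ ↦ sq_nonneg _) (fun k ↦ ?_)
    (P.summable_norm_eigenmode_sub_freeMode_sq.mul_right ((‖F P.b‖ + ‖F P.a‖) ^ 2))
  have hle (x : P.domain) : ‖(P.eigenfunction k - P.freeEigenfunction k) x‖ ≤
      ‖P.eigenmode k - P.freeMode k‖ := by
    simpa [freeMode_apply, eigenmode, toContinuousMap] using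
      (P.eigenmode k - P.freeMode k).norm_coe_le_norm x
  rw [boundaryForm_sub_left, ← sq_abs, ← mul_pow, mul_add]
  refine pow_le_pow_left₀ (abs_nonneg _) ((P.abs_boundaryForm_le _ _).trans ?_) 2
  gcongr
  · exact hle ⟨_, P.b_mem⟩
  · exact hle ⟨_, P.a_mem⟩

/- Green's identity gives `λ_k c_k = ⟨y_k, D F⟩ - [y_k, F]`, where the first coefficient is square
summable and `λ_k` is `π k / arc b` up to a bounded error. -/
theorem summable_pairing_eigenfunction_add (hF : ContDiffOn ℝ 1 F P.domain) :
    Summable fun k : ℤ ↦ P.pairing (P.eigenfunction k) F +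
      P.arc P.b / Real.pi * ((k : ℝ)⁻¹ * P.boundaryForm (P.freeEigenfunction k) F) := by
  obtain ⟨M, hM⟩ := P.exists_norm_le P.continuousOn_m
  set δ : ℤ → ℝ := fun k ↦ P.eigenvalue k * P.arc P.b - k * Real.pi
  have hδ (k : ℤ) : |δ k| ≤ |P.α - P.β + P.gauge P.b| + M * (P.b - P.a) := by
    have hδk : δ k = P.α - P.β + P.gauge P.b - (P.distortion (P.eigenvalue k) P.b).im := by
      simp only [δ, eigenvalue_mul_arc_b]
      ring
    rw [hδk]
    exact (abs_sub _ _).trans (add_le_add_right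
      ((Complex.abs_im_le_norm _).trans (P.norm_distortion_le hM _ P.b_mem)) _)
  have hop := summable_inv_intCast_mul_of_summable_sq
    (summable_pairing_eigenfunction_sq (continuousOn_diracOp hF))
  have hbdry := summable_inv_intCast_mul_of_summable_sq
    (P.summable_boundaryForm_eigenfunction_sub_sq (F := F))
  have hδc : Summable fun k : ℤ ↦ δ k * ((k : ℝ)⁻¹ * P.pairing (P.eigenfunction k) F) :=
    .of_norm_bounded ((summable_inv_intCast_mul_of_summable_sq
      (summable_pairing_eigenfunction_sq hF.continuousOn)).norm.mul_left _) fun k ↦ by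
        rw [norm_mul]
        exact mul_le_mul_of_nonneg_right (hδ k) (norm_nonneg _)
  refine ((((hop.sub hbdry).mul_left (P.arc P.b)).sub hδc).mul_left
    Real.pi⁻¹).congr_cofinite ?_
  filter_upwards [(finite_singleton (0 : ℤ)).compl_mem_cofinite] with k hk
  have hk₀ : (k : ℝ) ≠ 0 := Int.cast_ne_zero.2 hk
  have hGreen := (P.isSolution_eigenfunction k).mul_pairing hF
  simp only [δ]
  field_simp
  linear_combination -P.arc P.b * hGreen

end Coefficients

section Convergence

variable {P} {F : ℝ → ℂ}

theorem norm_freeMode_le (k : ℤ) : ‖P.freeMode k‖ ≤ (√(P.arc P.b))⁻¹ :=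
  (ContinuousMap.norm_le _ (inv_nonneg.2 (Real.sqrt_nonneg _))).2 fun x ↦ by
    rw [freeMode_apply, norm_freeEigenfunction]

theorem summable_smul_eigenmode_add (hF : ContDiffOn ℝ 1 F P.domain) :
    Summable fun k : ℤ ↦ P.pairing (P.eigenfunction k) F • P.eigenmode k +
      (P.arc P.b / Real.pi * ((k : ℝ)⁻¹ * P.boundaryForm (P.freeEigenfunction k) F)) •
        P.freeMode k := by
  have hdiff : Summable fun k ↦
      P.pairing (P.eigenfunction k) F • (P.eigenmode k - P.freeMode k) :=
    .of_norm <| by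
      simpa only [norm_smul] using (summable_mul_of_summable_sq
        (by simpa only [norm_pow] using (summable_pairing_eigenfunction_sq hF.continuousOn).norm)
        P.summable_norm_eigenmode_sub_freeMode_sq)
  have hfree := Summable.of_norm_bounded
    ((summable_pairing_eigenfunction_add hF).norm.mul_right (√(P.arc P.b))⁻¹)
    (f := fun k ↦ (P.pairing (P.eigenfunction k) F + P.arc P.b / Real.pi *
      ((k : ℝ)⁻¹ * P.boundaryForm (P.freeEigenfunction k) F)) • P.freeMode k) fun k ↦ by
    rw [norm_smul]
    gcongr
    exact norm_freeMode_le k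
  refine (hdiff.add hfree).congr fun k ↦ ?_
  module

variable {Y : Type*} [TopologicalSpace Y] [CompactSpace Y] {ι : C(Y, P.domain)}

theorem summable_boundaryForm_smul_freeMode_comp (hι : ∀ y, (ι y : ℝ) ∈ Ioo P.a P.b) (F : ℝ → ℂ) :
    Summable (fun k : ℤ ↦ ((k : ℝ)⁻¹ * P.boundaryForm (P.freeEigenfunction k) F) •
      (P.freeMode k).comp ι) (conditional ℤ) := by
  set φ := P.angle.comp ι
  have hsin (y : Y) : Real.sin (φ y) ≠ 0 := by
    obtain ⟨h₀, h₁⟩ : φ y ∈ Ioo 0 Real.pi := P.angle_mem_Ioo (hι y)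
    exact (Real.sin_pos_of_pos_of_lt_pi h₀ h₁).ne'
  have hplus := summable_inv_smul_expMulI (φ := φ) fun y ↦
    expMulI_apply_ne_one (hsin y)
  have hminus := summable_inv_smul_expMulI (φ := φ + .const Y Real.pi) fun y ↦
    expMulI_apply_ne_one (by simpa [Real.sin_add_pi] using hsin y)
  set u := (√(P.arc P.b))⁻¹ • (√(P.arc P.b))⁻¹ • expMulI (P.offset.comp ι)
  refine (((hminus.const_smul (Complex.exp (P.β * Complex.I) * F P.b).im).sub
    (hplus.const_smul (Complex.exp (P.α * Complex.I) * F P.a).im)).mul_left u).congr fun k ↦ ?_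
  have hcomp : (P.freeMode k).comp ι =
      (√(P.arc P.b))⁻¹ • (expMulI (P.offset.comp ι) * expMulI (k • φ)) := by
    rw [← expMulI_add]
    rfl
  rw [boundaryForm_freeEigenfunction, hcomp, expMulI_zsmul_add_const_pi]
  simp only [u, smul_mul_assoc, mul_sub, mul_smul_comm]
  module

theorem summable_smul_eigenmode_comp (hF : ContDiffOn ℝ 1 F P.domain)
    (hι : ∀ y, (ι y : ℝ) ∈ Ioo P.a P.b) :
    Summable (fun k ↦ P.pairing (P.eigenfunction k) F • (P.eigenmode k).comp ι)
      (conditional ℤ) := by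
  have hreg := ((summable_smul_eigenmode_add hF).map (ContinuousMap.compCLM ℝ ℂ ι)
    (ContinuousMap.compCLM ℝ ℂ ι).continuous).mono_filter (LeAtTop.le_atTop (L := conditional ℤ))
  have hsing := (summable_boundaryForm_smul_freeMode_comp hι F).const_smul (P.arc P.b / Real.pi)
  refine (hreg.sub hsing).congr fun k ↦ ?_
  simp only [Function.comp_apply, ContinuousMap.compCLM_apply, ContinuousMap.add_comp,
    ContinuousMap.smul_comp]
  module

theorem hasSum_smul_toL2_eigenmode (hF : ContinuousOn F P.domain) :
    HasSum (fun k ↦ P.pairing (P.eigenfunction k) F • P.toL2 (P.eigenmode k))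
      (P.toL2 (P.toContinuousMap F hF)) :=
  (P.eigenbasis.hasSum_repr _).congr_fun fun k ↦ by
    rw [P.eigenbasis.repr_apply_apply, eigenbasis_apply, eigenmode, inner_toL2_toContinuousMap]

theorem hasSum_pairing_smul_eigenfunction (hF : ContDiffOn ℝ 1 F P.domain)
    (hx : x ∈ Ioo P.a P.b) :
    HasSum (fun k ↦ P.pairing (P.eigenfunction k) F • P.eigenfunction k x) (F x)
      (conditional ℤ) := by
  obtain ⟨K, hK, hxK, hKsub⟩ := exists_compact_subset (x := ⟨x, Ioo_subset_Icc_self hx⟩)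
    ((isOpen_Ioo (a := P.a) (b := P.b)).preimage (continuous_subtype_val (p := (· ∈ P.domain)))) hx
  have : CompactSpace K := isCompact_iff_compactSpace.1 hK
  have hsum := summable_smul_eigenmode_comp
    (ι := ⟨((↑) : K → P.domain), continuous_subtype_val⟩) hF fun y ↦ hKsub y.2
  have hL2 : Tendsto (fun s ↦ P.toL2 (∑ k ∈ s, P.pairing (P.eigenfunction k) F • P.eigenmode k))
      (conditional ℤ).filter (𝓝 (P.toL2 (P.toContinuousMap F hF.continuousOn))) := by
    simp_rw [map_sum, map_smul]
    exact (hasSum_smul_toL2_eigenmode hF.continuousOn).mono_left LeAtTop.le_atTop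
  set w : P.domain → ℂ :=
    fun y ↦ ∑'[conditional ℤ] k, P.pairing (P.eigenfunction k) F • P.eigenmode k y
  have hpt (y : P.domain) (hy : y ∈ K) :
      HasSum (fun k ↦ P.pairing (P.eigenfunction k) F • P.eigenmode k y) (w y) (conditional ℤ) :=
    (ContinuousMap.hasSum_apply hsum.hasSum ⟨y, hy⟩).summable.hasSum
  have hw : ContinuousOn w K := continuousOn_iff_continuous_domRestrict.2 <|
    (ContinuousMap.continuous (∑'[conditional ℤ] k, _)).congr fun y ↦
      (ContinuousMap.tsum_apply hsum y).symm
  have hlim := eqOn_of_tendsto_toLp_of_forall_tendsto (w := w) isOpen_interior hL2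
    (fun y hy ↦ by simpa [HasSum] using hpt y (interior_subset hy)) (hw.mono interior_subset) hxK
  have hlim_sum := hpt _ (interior_subset hxK)
  rwa [hlim] at hlim_sum

end Convergence

section Expansion

variable {P}

theorem pairing_comm (w z : ℝ → ℂ) : P.pairing w z = P.pairing z w := by
  simp_rw [pairing, Complex.mul_re, Complex.conj_re, Complex.conj_im, neg_mul, mul_comm]

theorem pairing_eq_mul_of_eqOn_smul {w y z : ℝ → ℂ} {c : ℝ}
    (hw : EqOn w (c • y) P.domain) : P.pairing w z = c * P.pairing y z := by
  rw [pairing, pairing, ← intervalIntegral.integral_const_mul]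
  refine intervalIntegral.integral_congr fun x hx ↦ ?_
  rw [uIcc_of_le P.a_lt_b.le] at hx
  simp only [hw hx, Pi.smul_apply, Complex.real_smul, map_mul, Complex.conj_ofReal, mul_assoc,
    Complex.re_ofReal_mul]
  ring

theorem IsSolution.exists_eqOn_smul_eigenfunction {lam : ℝ} {z : ℝ → ℂ} (hz : P.IsSolution lam z)
    (hbc : P.SatisfiesBC z) (hnorm : P.pairing z z = 1) :
    ∃ k, lam = P.eigenvalue k ∧ ∃ c : ℝ, c ^ 2 = 1 ∧ EqOn z (c • P.eigenfunction k) P.domain := by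
  have hne : ∃ x ∈ P.domain, z x ≠ 0 := by
    by_contra! hzero
    have hpairing := pairing_eq_mul_of_eqOn_smul (P := P) (w := z) (z := z) (c := 0) (y := 0)
      fun x hx ↦ by simp [hzero x hx]
    rw [hnorm, zero_mul] at hpairing
    exact one_ne_zero hpairing
  obtain ⟨k, rfl⟩ := hz.exists_eigenvalue_eq hbc hne
  obtain ⟨c, hc⟩ := hz.exists_eq_smul_prueferSolution hbc.1
  have hzy : EqOn z ((c * √(P.massOf (P.prueferSolution (P.eigenvalue k)))) • P.eigenfunction k)
      P.domain := fun x hx ↦ by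
    rw [hc x hx, Pi.smul_apply, eigenfunction, smul_smul, mul_assoc,
      mul_inv_cancel₀ (Real.sqrt_ne_zero'.2 (P.massOf_prueferSolution_pos _)), mul_one]
  refine ⟨k, rfl, _, ?_, hzy⟩
  rwa [pairing_eq_mul_of_eqOn_smul hzy, pairing_comm, pairing_eq_mul_of_eqOn_smul hzy,
    pairing_eigenfunction, if_pos rfl, mul_one, ← sq] at hnorm

theorem hasSum_pairing_smul_of_orthonormal {lam : ℤ → ℝ} {z : ℤ → ℝ → ℂ} {F : ℝ → ℂ}
    (hz : ∀ n, P.IsSolution (lam n) (z n)) (hbc : ∀ n, P.SatisfiesBC (z n))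
    (hmono : Monotone lam) (hcomplete : ∀ k, ∃ n, lam n = P.eigenvalue k)
    (horth : ∀ m n, P.pairing (z m) (z n) = if m = n then 1 else 0)
    (hF : ContDiffOn ℝ 1 F P.domain) (hx : x ∈ Ioo P.a P.b) :
    HasSum (fun n ↦ P.pairing (z n) F • z n x) (F x) (conditional ℤ) := by
  choose σ hσ c hc hzy using fun n ↦ (hz n).exists_eqOn_smul_eigenfunction (hbc n)
    ((horth n n).trans (if_pos rfl))
  have hinj : Function.Injective σ := fun m n hmn ↦ by
    by_contra hne
    have hzero := horth m n
    rw [if_neg hne, pairing_eq_mul_of_eqOn_smul (hzy m), pairing_comm,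
      pairing_eq_mul_of_eqOn_smul (hzy n), pairing_eigenfunction, if_pos hmn.symm, mul_one] at hzero
    have hone_eq_zero := congrArg (· ^ 2) hzero
    simp [mul_pow, hc] at hone_eq_zero
  have hσmono : StrictMono σ := Monotone.strictMono_of_injective
    (fun m n hmn ↦ P.strictMono_eigenvalue.le_iff_le.1 (hσ m ▸ hσ n ▸ hmono hmn)) hinj
  have hsurj : Function.Surjective σ := fun k ↦ (hcomplete k).imp fun n hn ↦
    P.strictMono_eigenvalue.injective ((hσ n).symm.trans hn)
  obtain ⟨k, hk⟩ := exists_eq_add_of_strictMono_of_surjective hσmono hsurj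
  refine (hasSum_conditional_int_comp_add_right (hasSum_pairing_smul_eigenfunction hF hx)
    k).congr_fun fun n ↦ ?_
  rw [pairing_eq_mul_of_eqOn_smul (hzy n), hzy n (Ioo_subset_Icc_self hx), Pi.smul_apply, smul_smul,
    mul_right_comm, ← sq, hc, one_mul, hk]

end Expansion

section RealForm

/-- The complex encoding `g + i f` of the pair `(f, g)`. -/
def spinor (f g : ℝ → ℝ) (x : ℝ) : ℂ := ⟨g x, f x⟩

theorem hasDerivWithinAt_spinor_iff {f g : ℝ → ℝ} {z' : ℂ} {s : Set ℝ} :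
    HasDerivWithinAt (spinor f g) z' s x ↔
      HasDerivWithinAt f z'.im s x ∧ HasDerivWithinAt g z'.re s x := by
  refine ⟨fun h ↦ ⟨Complex.imCLM.hasFDerivAt.comp_hasDerivWithinAt x h,
    Complex.reCLM.hasFDerivAt.comp_hasDerivWithinAt x h⟩, fun ⟨hf, hg⟩ ↦ ?_⟩
  have hfg := hg.ofReal_comp.add (hf.ofReal_comp.mul_const Complex.I)
  rw [Complex.re_add_im] at hfg
  exact hfg.congr (fun y _ ↦ Complex.mk_eq_add_mul_I _ _) (Complex.mk_eq_add_mul_I _ _)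

theorem contDiffOn_spinor {f g : ℝ → ℝ} {s : Set ℝ} (hf : ContDiffOn ℝ 1 f s)
    (hg : ContDiffOn ℝ 1 g s) : ContDiffOn ℝ 1 (spinor f g) s :=
  ((Complex.ofRealCLM.contDiff.comp_contDiffOn hg).add
    ((Complex.ofRealCLM.contDiff.comp_contDiffOn hf).mul contDiffOn_const)).congr
      fun _ _ ↦ Complex.mk_eq_add_mul_I _ _

theorem tendsto_sum_of_hasSum_spinor {C : ℤ → ℝ} {f g : ℤ → ℝ → ℝ} {F₁ F₂ : ℝ → ℝ}
    (h : HasSum (fun n ↦ C n • spinor (f n) (g n) x) (spinor F₁ F₂ x) (conditional ℤ)) :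
    Tendsto (fun N : ℕ ↦ (∑ n ∈ Finset.Icc (-(N : ℤ)) N, C n * f n x,
      ∑ n ∈ Finset.Icc (-(N : ℤ)) N, C n * g n x)) atTop (𝓝 (F₁ x, F₂ x)) := by
  have hsymm := hasSum_symmetricIcc_iff.1 (h.mono_left symmetricIcc_le_Conditional)
  refine ((Complex.continuous_im.tendsto _).comp hsymm |>.prodMk_nhds
    ((Complex.continuous_re.tendsto _).comp hsymm)).congr fun N ↦ ?_
  simp only [Function.comp_apply, Complex.im_sum, Complex.re_sum, Complex.smul_im, Complex.smul_re,
    spinor, smul_eq_mul]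

variable {a b : ℝ} {p q t ρ : ℝ → ℝ}

theorem satisfiesDiracSystem_iff {lam : ℝ} {f g : ℝ → ℝ} (hp : ContinuousOn p (Icc a b))
    (hq : ContinuousOn q (Icc a b)) (ht : ContinuousOn t (Icc a b))
    (hρ : ContinuousOn ρ (Icc a b)) :
    SatisfiesDiracSystem a b p q t ρ lam f g ↔ ∀ x ∈ Icc a b,
      HasDerivWithinAt f (-(t x * f x) - (q x - lam * ρ x) * g x) (Icc a b) x ∧
        HasDerivWithinAt g (t x * g x + (p x - lam * ρ x) * f x) (Icc a b) x := by
  refine ⟨fun ⟨f', g', hf, hg, _, _, heq, heq'⟩ x hx ↦ ⟨(hf x hx).congr_deriv ?_,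
    (hg x hx).congr_deriv ?_⟩, fun h ↦ ⟨_, _, fun x hx ↦ (h x hx).1, fun x hx ↦ (h x hx).2,
    ?_, ?_, fun x _ ↦ by ring, fun x _ ↦ by ring⟩⟩
  · linarith [heq' x hx]
  · linarith [heq x hx]
  all_goals
    have hf : ContinuousOn f (Icc a b) := fun x hx ↦ (h x hx).1.continuousWithinAt
    have hg : ContinuousOn g (Icc a b) := fun x hx ↦ (h x hx).2.continuousWithinAt
    fun_prop

variable (hab : a < b) (hp : ContDiffOn ℝ 1 p (Icc a b)) (hq : ContDiffOn ℝ 1 q (Icc a b))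
  (ht : ContDiffOn ℝ 1 t (Icc a b)) (hρ : ContDiffOn ℝ 1 ρ (Icc a b))
  (hρpos : ∀ x ∈ Icc a b, 0 < ρ x) (α β : ℝ)

/-- The complex form of the Dirac problem with real coefficients `p`, `q`, `t`, `ρ`. -/
noncomputable def ofReal : DiracProblem where
  a := a
  b := b
  α := α
  β := β
  ρ := ρ
  s x := (p x + q x) / 2
  m x := t x + ((p x - q x) / 2 : ℝ) * Complex.I
  a_lt_b := hab
  contDiffOn_ρ := hρ
  ρ_pos := hρpos
  continuousOn_s := (hp.continuousOn.add hq.continuousOn).div_const 2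
  contDiffOn_m := (Complex.ofRealCLM.contDiff.comp_contDiffOn ht).add
    ((Complex.ofRealCLM.contDiff.comp_contDiffOn ((hp.sub hq).div_const 2)).mul contDiffOn_const)

local notation "𝒫" => ofReal hab hp hq ht hρ hρpos α β

theorem isSolution_spinor_iff {lam : ℝ} {f g : ℝ → ℝ} :
    (𝒫).IsSolution lam (spinor f g) ↔ SatisfiesDiracSystem a b p q t ρ lam f g := by
  rw [satisfiesDiracSystem_iff hp.continuousOn hq.continuousOn ht.continuousOn hρ.continuousOn]
  refine forall₂_congr fun x _ ↦ hasDerivWithinAt_spinor_iff.trans ?_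
  congr! 2 <;>
  · simp only [ofReal, spinor, Complex.add_re, Complex.add_im, Complex.mul_re, Complex.mul_im,
      Complex.conj_re, Complex.conj_im, Complex.ofReal_re, Complex.ofReal_im, Complex.I_re,
      Complex.I_im]
    ring

theorem satisfiesBC_spinor_iff {f g : ℝ → ℝ} :
    (𝒫).SatisfiesBC (spinor f g) ↔ DiracBC a b α β f g := by
  simp only [SatisfiesBC, DiracBC, spinor, ofReal, Complex.mul_im, Complex.exp_ofReal_mul_I_re,
    Complex.exp_ofReal_mul_I_im, add_comm]

theorem isDiracEigenvalue_eigenvalue (k : ℤ) :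
    IsDiracEigenvalue a b p q t ρ α β ((𝒫).eigenvalue k) := by
  refine ⟨fun x ↦ ((𝒫).prueferSolution ((𝒫).eigenvalue k) x).im,
    fun x ↦ ((𝒫).prueferSolution ((𝒫).eigenvalue k) x).re,
    (isSolution_spinor_iff hab hp hq ht hρ hρpos α β).1 (isSolution_prueferSolution _ _),
    ⟨a, left_mem_Icc.2 hab.le, ?_⟩,
    (satisfiesBC_spinor_iff hab hp hq ht hρ hρpos α β).1
      (satisfiesBC_prueferSolution_eigenvalue _ k)⟩
  by_contra! hzero
  exact (𝒫).prueferSolution_ne_zero ((𝒫).eigenvalue k) a (Complex.ext hzero.2 hzero.1)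

theorem pairing_spinor (f g F₁ F₂ : ℝ → ℝ) : (𝒫).pairing (spinor f g) (spinor F₁ F₂) =
    ∫ x in a..b, ρ x * (f x * F₁ x + g x * F₂ x) := by
  simp [pairing, spinor, ofReal, add_comm]

end RealForm

end DiracProblem

/-- For every `x ∈ (a,b)` the symmetric partial sums
`S_N(x) = ∑_{n=-N}^{N} C_n (f_n(x), g_n(x))` converge to `(F₁(x), F₂(x))`. -/
theorem dirac_expansion_converges_interior
    (a b : ℝ) (hab : a < b)
    (p q t ρ : ℝ → ℝ)
    (hp : ContDiffOn ℝ 1 p (Set.Icc a b)) (hq : ContDiffOn ℝ 1 q (Set.Icc a b))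
    (ht : ContDiffOn ℝ 1 t (Set.Icc a b)) (hρ : ContDiffOn ℝ 1 ρ (Set.Icc a b))
    (hρpos : ∀ x ∈ Set.Icc a b, 0 < ρ x)
    (α β : ℝ) (hα : α ∈ Set.Ico 0 (2 * Real.pi)) (hβ : β ∈ Set.Ico 0 (2 * Real.pi))
    -- the listing of all eigenvalues with eigenfunctions
    (lam : ℤ → ℝ) (f g : ℤ → ℝ → ℝ)
    (heig : ∀ n : ℤ, SatisfiesDiracSystem a b p q t ρ (lam n) (f n) (g n) ∧
      DiracBC a b α β (f n) (g n))
    (hord : ∀ n : ℤ, lam n ≤ lam (n + 1))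
    (hgrow : Filter.Tendsto (fun n : ℤ => |lam n|) Filter.cofinite Filter.atTop)
    (hcomplete : ∀ μ : ℝ, IsDiracEigenvalue a b p q t ρ α β μ → ∃ n, lam n = μ)
    (horth : ∀ m n : ℤ,
      (∫ x in a..b, ρ x * (f m x * f n x + g m x * g n x)) = if m = n then 1 else 0)
    -- the expanded function and its expansion coefficients
    (F₁ F₂ : ℝ → ℝ)
    (hF₁ : ContDiffOn ℝ 1 F₁ (Set.Icc a b)) (hF₂ : ContDiffOn ℝ 1 F₂ (Set.Icc a b))
    (C : ℤ → ℝ)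
    (hC : ∀ n, C n = ∫ x in a..b, ρ x * (f n x * F₁ x + g n x * F₂ x)) :
    ∀ x ∈ Set.Ioo a b,
      Filter.Tendsto
        (fun N : ℕ =>
          ((∑ n ∈ Finset.Icc (-(N : ℤ)) (N : ℤ), C n * f n x),
           (∑ n ∈ Finset.Icc (-(N : ℤ)) (N : ℤ), C n * g n x)))
        Filter.atTop (nhds (F₁ x, F₂ x)) := by
  set P := DiracProblem.ofReal hab hp hq ht hρ hρpos α β
  intro x hx
  refine DiracProblem.tendsto_sum_of_hasSum_spinor ?_
  simp_rw [hC, ← DiracProblem.pairing_spinor hab hp hq ht hρ hρpos α β]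
  refine DiracProblem.hasSum_pairing_smul_of_orthonormal (P := P) (lam := lam)
    (fun n ↦ (DiracProblem.isSolution_spinor_iff ..).2 (heig n).1)
    (fun n ↦ (DiracProblem.satisfiesBC_spinor_iff ..).2 (heig n).2) (monotone_int_of_le_succ hord)
    (fun k ↦ hcomplete _ (DiracProblem.isDiracEigenvalue_eigenvalue ..)) (fun m n ↦ ?_)
    (DiracProblem.contDiffOn_spinor hF₁ hF₂) hx
  rw [DiracProblem.pairing_spinor, horth]
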